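/- arXiv:1411.3432 — 11 statements merged into one kernel-verified Lean document; each statement's English description precedes it below -/
import Mathlib

section
/- Every isometry φ of C_n can be written as φ = T_a ∘ π for a unique word a ∈ C_n and a unique permutation π of {1,...,n}. Conversely, for every word a ∈ C_n and every permutation π of {1,...,n}, the map T_a ∘ π is an isometry of C_n. -/
theorem z2_cases (a : ZMod 2) : a = 0 ∨ a = 1 := by
  revert a; decide

theorem dist_single_zero {n : ℕ} (x : Fin n → ZMod 2) (i : Fin n) (h : x i = 0) :
    hammingDist x (Pi.single i 1) = hammingDist x 0 + 1 := by
  unfold hammingDist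
  rw [← Finset.card_insert_of_notMem (a := i) (by simp [h])]
  congr 1
  ext k
  by_cases hk : k = i
  · subst hk; simp [h]
  · simp [hk]

theorem dist_single_one {n : ℕ} (x : Fin n → ZMod 2) (i : Fin n) (h : x i = 1) :
    hammingDist x (Pi.single i 1) + 1 = hammingDist x 0 := by
  unfold hammingDist
  rw [← Finset.card_insert_of_notMem (a := i) (by simp [h])]
  congr 1
  ext k
  by_cases hk : k = i
  · subst hk; simp [h]
  · simp [hk]

theorem eq_single_of_dist {n : ℕ} (y : Fin n → ZMod 2) (h : hammingDist y 0 = 1) :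
    ∃ j, y = Pi.single j 1 := by
  unfold hammingDist at h
  obtain ⟨j, hj⟩ := Finset.card_eq_one.1 h
  refine ⟨j, ?_⟩
  ext1 k
  have hk := Finset.ext_iff.1 hj k
  simp only [Finset.mem_filter, Finset.mem_univ, true_and, Finset.mem_singleton,
    Pi.zero_apply] at hk
  by_cases hkj : k = j
  · subst hkj
    rcases z2_cases (y k) with h0 | h1
    · simp [h0] at hk
    · simp [h1]
  · rw [Pi.single_eq_of_ne hkj]
    by_contra h0
    exact hkj (hk.1 h0)

theorem cube_dist_add {n : ℕ} (x y a : Fin n → ZMod 2) :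
    hammingDist (x + a) (y + a) = hammingDist x y := by
  simp [hammingDist]

theorem dist_perm {n : ℕ} (x y : Fin n → ZMod 2) (π : Equiv.Perm (Fin n)) :
    hammingDist (fun k => x (π k)) (fun k => y (π k)) = hammingDist x y := by
  unfold hammingDist
  exact Finset.card_equiv π (by simp)

theorem fixing_zero {n : ℕ} (ψ : (Fin n → ZMod 2) → Fin n → ZMod 2) (h0 : ψ 0 = 0)
    (hd : ∀ x y, hammingDist (ψ x) (ψ y) = hammingDist x y) :
    ∃ π : Equiv.Perm (Fin n), ∀ c k, ψ c k = c (π k) := by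
  have hw : ∀ x, hammingDist (ψ x) 0 = hammingDist x 0 := fun x => by
    have := hd x 0
    rwa [h0] at this
  have he : ∀ i : Fin n, ∃ j, ψ (Pi.single i 1) = Pi.single j 1 := fun i => by
    apply eq_single_of_dist
    rw [hw]
    have := dist_single_one (Pi.single i 1 : Fin n → ZMod 2) i (by simp)
    rw [hammingDist_self] at this
    exact this.symm
  choose σ hσ using he
  have hs : Function.Injective σ := fun i j hij => by
    have h1 : ψ (Pi.single i 1) = ψ (Pi.single j 1) := by rw [hσ, hσ, hij]
    have h2 := hd (Pi.single i 1) (Pi.single j 1)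
    rw [h1, hammingDist_self] at h2
    have h3 := congrFun (hammingDist_eq_zero.1 h2.symm) i
    by_contra hne
    simp [hne] at h3
  let e : Equiv.Perm (Fin n) := Equiv.ofBijective σ (Finite.injective_iff_bijective.1 hs)
  have key : ∀ c i, ψ c (σ i) = c i := fun c i => by
    have h1 := hd c (Pi.single i 1)
    have h2 := hw c
    rw [hσ] at h1
    rcases z2_cases (ψ c (σ i)) with a | a <;> rcases z2_cases (c i) with b | b
    · rw [a, b]
    · have := dist_single_zero _ _ a
      have := dist_single_one _ _ b
      omega
    · have := dist_single_one _ _ a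
      have := dist_single_zero _ _ b
      omega
    · rw [a, b]
  refine ⟨e.symm, fun c k => ?_⟩
  rw [← key c (e.symm k)]
  exact congrArg (ψ c) (e.apply_symm_apply k).symm

/-- Every isometry of the Boolean cube `C_n` is uniquely the composition `T_a ∘ π` of a
coordinate permutation `π` and a translation `T_a`, and conversely every such composition
is an isometry. -/
theorem isometry_eq_translation_comp_perm (n : ℕ) (hn : 1 ≤ n) :
    (∀ φ : (Fin n → ZMod 2) → Fin n → ZMod 2,
      Function.Bijective φ →
      (∀ x y, hammingDist (φ x) (φ y) = hammingDist x y) →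
      ∃! p : (Fin n → ZMod 2) × Equiv.Perm (Fin n),
        φ = fun c => (fun k => c (p.2 k)) + p.1) ∧
    (∀ (a : Fin n → ZMod 2) (π : Equiv.Perm (Fin n)),
      Function.Bijective (fun c : Fin n → ZMod 2 => (fun k => c (π k)) + a) ∧
      ∀ x y : Fin n → ZMod 2,
        hammingDist ((fun k => x (π k)) + a) ((fun k => y (π k)) + a)
          = hammingDist x y) := by
  constructor
  · intro φ _ hd
    obtain ⟨π, hπ⟩ := fixing_zero (fun c => φ c + -φ 0) (by simp)
      (fun x y => by rw [cube_dist_add, hd])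
    refine ⟨(φ 0, π), ?_, ?_⟩
    · funext c k
      have := hπ c k
      simp only [Pi.add_apply, Pi.neg_apply] at this ⊢
      rw [← this]; ring
    · rintro ⟨a, ρ⟩ h
      have ha : φ 0 = a := by rw [h]; funext k; simp
      refine Prod.ext ha.symm (Equiv.ext fun k => ?_)
      have h1 := hπ (Pi.single (ρ k) 1) k
      rw [ha, h] at h1
      by_contra hne
      have hne' : π k ≠ ρ k := fun h => hne h.symm
      simp [hne'] at h1
      revert h1
      generalize a k = b
      revert b
      decide
  · intro a π
    have hd : ∀ x y : Fin n → ZMod 2,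
        hammingDist ((fun k => x (π k)) + a) ((fun k => y (π k)) + a)
          = hammingDist x y := fun x y => by rw [cube_dist_add, dist_perm]
    refine ⟨Finite.injective_iff_bijective.1 fun x y hxy => ?_, hd⟩
    have := hd x y
    change (fun k => x (π k)) + a = (fun k => y (π k)) + a at hxy
    rw [hxy, hammingDist_self] at this
    exact hammingDist_eq_zero.1 this.symm
end

section
/- Let p be an odd integer with 1 ≤ p ≤ n such that 2p ≠ n−1, 2p ≠ n, 2p ≠ n+1 and p ≠ n. Then every p-isometry of C_n is an isometry. -/
open Finset in
/-- Number of `z` at distance `i+l` from `x` and `i'+l` from `y`, where `d(x,y) = i+i'`. -/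
lemma krasin_count {n : ℕ} (x y : Fin n → ZMod 2) (i i' l : ℕ) (h : hammingDist x y = i + i') :
    #{z : Fin n → ZMod 2 | hammingDist x z = i + l ∧ hammingDist z y = i' + l} =
      (i + i').choose i * (n - (i + i')).choose l := by
  classical
  set D : Finset (Fin n) := {a | x a ≠ y a} with hD
  have hDc : #D = i + i' := h
  have hDc' : #Dᶜ = n - (i + i') := by rw [card_compl, hDc, Fintype.card_fin]
  have z2 : ∀ u v w : ZMod 2, u ≠ v → (w ≠ v ↔ w = u) := by decide
  have z3 : ∀ u : ZMod 2, u + 1 ≠ u := by decide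
  have z4 : ∀ u v : ZMod 2, u ≠ v → u + 1 = v := by decide
  have dx : ∀ z : Fin n → ZMod 2, hammingDist x z =
      #{a ∈ D | x a ≠ z a} + #{a ∈ Dᶜ | x a ≠ z a} := by
    intro z
    rw [← card_union_of_disjoint]
    · unfold hammingDist
      congr 1
      ext a
      simp only [mem_filter, mem_univ, true_and, mem_union, mem_compl]
      tauto
    · rw [disjoint_left]; intro a; simp only [mem_filter, mem_compl]; tauto
  have dy : ∀ z : Fin n → ZMod 2, hammingDist z y + #{a ∈ D | x a ≠ z a} =
      (i + i') + #{a ∈ Dᶜ | x a ≠ z a} := by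
    intro z
    have e1 : hammingDist z y = #{a ∈ D | ¬ x a ≠ z a} + #{a ∈ Dᶜ | x a ≠ z a} := by
      rw [← card_union_of_disjoint]
      · unfold hammingDist
        congr 1
        ext a
        simp only [mem_filter, mem_univ, true_and, mem_union, mem_compl, hD]
        generalize x a = u
        generalize y a = v
        generalize z a = w
        revert u v w; decide
      · rw [disjoint_left]; intro a; simp only [mem_filter, mem_compl]; tauto
    have e2 := card_filter_add_card_filter_not (s := D) (fun a => x a ≠ z a)
    omega
  have key : #(powersetCard i D ×ˢ powersetCard l Dᶜ) =
      (i + i').choose i * (n - (i + i')).choose l := by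
    rw [card_product, card_powersetCard, card_powersetCard, hDc, hDc']
  rw [← key]
  refine card_nbij' (fun z => ({a ∈ D | x a ≠ z a}, {a ∈ Dᶜ | x a ≠ z a}))
    (fun P a => if a ∈ P.1 ∪ P.2 then x a + 1 else x a) ?_ ?_ ?_ ?_
  · intro z hz
    simp only [coe_filter, mem_univ, true_and, Set.mem_ofPred_eq] at hz
    have := dx z
    have := dy z
    simp only [mem_coe, mem_product, mem_powersetCard, filter_subset, true_and]
    omega
  · rintro ⟨A, B⟩ hP
    simp only [mem_coe, mem_product, mem_powersetCard] at hP
    obtain ⟨⟨hA, hAc⟩, hB, hBc⟩ := hP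
    simp only [coe_filter, mem_univ, true_and, Set.mem_ofPred_eq]
    set z : Fin n → ZMod 2 := fun a => if a ∈ A ∪ B then x a + 1 else x a with hz
    have hne : ∀ a, x a ≠ z a ↔ a ∈ A ∪ B := by
      intro a
      by_cases ha : a ∈ A ∪ B
      · simp only [hz, ha, if_true, iff_true]; exact (z3 _).symm
      · simp only [hz, ha, if_false, iff_false]; simp
    have eA : ({a ∈ D | x a ≠ z a} : Finset _) = A := by
      ext a
      simp only [mem_filter, hne, mem_union]
      constructor
      · rintro ⟨h1, h2 | h2⟩
        · exact h2
        · exact absurd h1 (mem_compl.1 (hB h2))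
      · intro h; exact ⟨hA h, Or.inl h⟩
    have eB : ({a ∈ Dᶜ | x a ≠ z a} : Finset _) = B := by
      ext a
      simp only [mem_filter, hne, mem_union]
      constructor
      · rintro ⟨h1, h2 | h2⟩
        · exact absurd (hA h2) (mem_compl.1 h1)
        · exact h2
      · intro h; exact ⟨hB h, Or.inr h⟩
    have := dx z
    have := dy z
    rw [eA, eB] at *
    omega
  · intro z _
    funext a
    simp only [mem_union, mem_filter, mem_compl]
    by_cases ha : x a = z a
    · simp [ha]
    · have : (a ∈ D ∧ x a ≠ z a ∨ a ∉ D ∧ x a ≠ z a) := by tauto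
      rw [if_pos this]
      exact z4 _ _ ha
  · rintro ⟨A, B⟩ hP
    simp only [mem_coe, mem_product, mem_powersetCard] at hP
    obtain ⟨⟨hA, hAc⟩, hB, hBc⟩ := hP
    have hne : ∀ a, x a ≠ (if a ∈ A ∪ B then x a + 1 else x a) ↔ a ∈ A ∪ B := by
      intro a
      by_cases ha : a ∈ A ∪ B
      · simp only [ha, if_true, iff_true]; exact (z3 _).symm
      · simp only [ha, if_false, iff_false]; simp
    simp only [hne, Prod.mk.injEq]
    constructor
    · ext a
      simp only [mem_filter, mem_union]
      constructor
      · rintro ⟨h1, h2 | h2⟩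
        · exact h2
        · exact absurd h1 (mem_compl.1 (hB h2))
      · intro h; exact ⟨hA h, Or.inl h⟩
    · ext a
      simp only [mem_filter, mem_union]
      constructor
      · rintro ⟨h1, h2 | h2⟩
        · exact absurd (hA h2) (mem_compl.1 h1)
        · exact h2
      · intro h; exact ⟨hB h, Or.inr h⟩

/-- Numerical description of the possible distances in a triangle. -/
lemma krasin_tri {n : ℕ} (x y z : Fin n → ZMod 2) :
    ∃ i i' l, hammingDist x y = i + i' ∧ hammingDist x z = i + l ∧ hammingDist z y = i' + l := by
  classical
  refine ⟨(Finset.univ.filter fun a => x a ≠ y a ∧ x a ≠ z a).card,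
    (Finset.univ.filter fun a => x a ≠ y a ∧ x a = z a).card,
    (Finset.univ.filter fun a => x a = y a ∧ x a ≠ z a).card, ?_, ?_, ?_⟩ <;>
  · unfold hammingDist
    rw [← Finset.card_union_of_disjoint]
    · congr 1
      ext a
      simp only [Finset.mem_filter, Finset.mem_univ, true_and, Finset.mem_union]
      generalize x a = u
      generalize y a = v
      generalize z a = w
      revert u v w; decide
    · rw [Finset.disjoint_left]; intro a; simp only [Finset.mem_filter]; tauto

lemma krasin_exists {n : ℕ} (x y : Fin n → ZMod 2) (i i' l : ℕ) (h : hammingDist x y = i + i')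
    (hl : i + i' + l ≤ n) :
    ∃ z, hammingDist x z = i + l ∧ hammingDist z y = i' + l := by
  have hc := krasin_count x y i i' l h
  have : 0 < (i + i').choose i * (n - (i + i')).choose l :=
    Nat.mul_pos (Nat.choose_pos (by omega)) (Nat.choose_pos (by omega))
  rw [← hc, Finset.card_pos] at this
  obtain ⟨z, hz⟩ := this
  exact ⟨z, by simpa using hz⟩

lemma krasin_central (a b : ℕ) (hab : a ≤ b) :
    (a + 1).centralBinom * b.centralBinom ≤ a.centralBinom * (b + 1).centralBinom := by
  have h1 := Nat.succ_mul_centralBinom_succ a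
  have h2 := Nat.succ_mul_centralBinom_succ b
  have h3 : (2 * a + 1) * (b + 1) ≤ (2 * b + 1) * (a + 1) := by nlinarith
  have h4 : 0 < (a + 1) * (b + 1) := by positivity
  refine Nat.le_of_mul_le_mul_left ?_ h4
  calc (a + 1) * (b + 1) * ((a + 1).centralBinom * b.centralBinom)
      = ((a + 1) * (a + 1).centralBinom) * ((b + 1) * b.centralBinom) := by ring
    _ = (2 * a + 1) * (b + 1) * (2 * a.centralBinom * b.centralBinom) := by rw [h1]; ring
    _ ≤ (2 * b + 1) * (a + 1) * (2 * a.centralBinom * b.centralBinom) :=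
        Nat.mul_le_mul_right _ h3
    _ = (a + 1) * a.centralBinom * (2 * (2 * b + 1) * b.centralBinom) := by ring
    _ = (a + 1) * (b + 1) * (a.centralBinom * (b + 1).centralBinom) := by rw [← h2]; ring

lemma krasin_central_le (a b : ℕ) (hab : a ≤ b) :
    (a + 1).centralBinom * (b + 1).centralBinom ≤ 2 * (a + b + 1).centralBinom := by
  induction a generalizing b with
  | zero => simp [Nat.centralBinom, Nat.choose]
  | succ a ih =>
    have h1 := krasin_central (a + 1) (b + 1) (by omega)
    have h2 := ih (b + 1) (by omega)
    calc _ ≤ _ := h1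
      _ ≤ _ := h2
      _ = _ := by congr 2; ring

lemma krasin_central_le' (a b : ℕ) :
    (a + 1).centralBinom * (b + 1).centralBinom ≤ 2 * (a + b + 1).centralBinom := by
  rcases le_total a b with h | h
  · exact krasin_central_le a b h
  · have := krasin_central_le b a h
    rw [mul_comm, add_comm a b]; exact this

lemma krasin_half (q : ℕ) : 2 * (2 * q + 1).choose q = (q + 1).centralBinom := by
  rw [Nat.centralBinom, show 2 * (q + 1) = (2 * q + 1) + 1 by ring, Nat.choose_succ_succ,
    Nat.choose_symm_half]
  ring

/-- step of the induction -/
lemma krasin_step (c t r q : ℕ)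
    (h : c * (2 * q + t + 2).choose (q + 1) ≤ 2 * (2 * r + t + 2).choose (r + 1)) (hq : q ≤ r) :
    c * (2 * q + t + 2).choose q ≤ 2 * (2 * r + t + 2).choose r ∧
    (q < r → c * (2 * q + t + 2).choose q < 2 * (2 * r + t + 2).choose r) := by
  have e1 := Nat.choose_succ_right_eq (2 * q + t + 2) q
  have e2 := Nat.choose_succ_right_eq (2 * r + t + 2) r
  rw [show 2 * q + t + 2 - q = q + t + 2 by omega] at e1
  rw [show 2 * r + t + 2 - r = r + t + 2 by omega] at e2
  have pA : 0 < (2 * r + t + 2).choose r := Nat.choose_pos (by omega)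
  generalize (2 * q + t + 2).choose (q + 1) = B at *
  generalize (2 * r + t + 2).choose (r + 1) = B' at *
  generalize (2 * q + t + 2).choose q = A at *
  generalize (2 * r + t + 2).choose r = A' at *
  have main : (c * A) * ((q + t + 2) * (r + 1)) ≤ (2 * A') * ((r + t + 2) * (q + 1)) := by
    calc (c * A) * ((q + t + 2) * (r + 1)) = c * (A * (q + t + 2)) * (r + 1) := by ring
      _ = (c * B) * ((q + 1) * (r + 1)) := by rw [← e1]; ring
      _ ≤ (2 * B') * ((q + 1) * (r + 1)) := Nat.mul_le_mul_right _ h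
      _ = 2 * (B' * (r + 1)) * (q + 1) := by ring
      _ = (2 * A') * ((r + t + 2) * (q + 1)) := by rw [e2]; ring
  constructor
  · have : (r + t + 2) * (q + 1) ≤ (q + t + 2) * (r + 1) := by nlinarith
    refine Nat.le_of_mul_le_mul_right (main.trans (Nat.mul_le_mul_left _ this)) (by positivity)
  · intro hlt
    have : (r + t + 2) * (q + 1) < (q + t + 2) * (r + 1) := by nlinarith
    refine Nat.lt_of_mul_lt_mul_right (main.trans_lt (Nat.mul_lt_mul_of_pos_left this ?_))
    positivity

/-- `k = j+1`, `q = p-k`, `r = p-1 = q+j`. -/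
lemma krasin_le (t : ℕ) : ∀ q j : ℕ, 1 ≤ q + t →
    (j + 1).centralBinom * (2 * q + t).choose q ≤ 2 * (2 * (q + j) + t).choose (q + j) := by
  induction t using Nat.twoStepInduction with
  | zero =>
    intro q j hq
    obtain ⟨q, rfl⟩ : ∃ r, q = r + 1 := ⟨q - 1, by omega⟩
    have := krasin_central_le' j q
    rw [show j + q + 1 = q + 1 + j by ring] at this
    exact this
  | one =>
    intro q j _
    have := krasin_central_le' j q
    rw [← krasin_half q, show j + q + 1 = (q + j) + 1 by ring, ← krasin_half (q + j)] at this
    linarith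
  | more t ih _ =>
    intro q j _
    have := ih (q + 1) j (by omega)
    rw [show 2 * (q + 1) + t = 2 * q + t + 2 by ring, show q + 1 + j = q + j + 1 by ring,
      show 2 * (q + j + 1) + t = 2 * (q + j) + t + 2 by ring] at this
    exact (krasin_step _ t (q + j) q this (by omega)).1

lemma krasin_lt (t q j : ℕ) (hj : 1 ≤ j) :
    (j + 1).centralBinom * (2 * q + t + 2).choose q <
      2 * (2 * (q + j) + t + 2).choose (q + j) := by
  have := krasin_le t (q + 1) j (by omega)
  rw [show 2 * (q + 1) + t = 2 * q + t + 2 by ring, show q + 1 + j = q + j + 1 by ring,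
    show 2 * (q + j + 1) + t = 2 * (q + j) + t + 2 by ring] at this
  exact (krasin_step _ t (q + j) q this (by omega)).2 (by omega)

lemma krasin_arith_aux (n p k : ℕ) (h : 2 * p + 2 ≤ n) (hk : 2 ≤ k) (hkp : k ≤ p) :
    (k + k).choose k * (n - (k + k)).choose (p - k) < 2 * (n - 2).choose (p - 1) := by
  have := krasin_lt (n - 2 * p - 2) (p - k) (k - 1) (by omega)
  rw [show k - 1 + 1 = k by omega, show 2 * (p - k) + (n - 2 * p - 2) + 2 = n - (k + k) by omega,
    show p - k + (k - 1) = p - 1 by omega,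
    show 2 * (p - 1) + (n - 2 * p - 2) + 2 = n - 2 by omega, Nat.centralBinom, two_mul] at this
  exact this

lemma krasin_arith (n p k : ℕ) (hp1 : 1 ≤ p) (hpn : p < n)
    (h1 : 2 * p + 1 ≠ n) (h2 : 2 * p ≠ n) (h3 : 2 * p ≠ n + 1)
    (hk : 2 ≤ k) (hkp : k ≤ p) (hkn : k + k ≤ n) :
    (k + k).choose k * (n - (k + k)).choose (p - k) < 2 * (n - 2).choose (p - 1) := by
  rcases lt_or_ge (2 * p) n with h | h
  · exact krasin_arith_aux n p k (by omega) hk hkp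
  · have hpos : 0 < (n - 2).choose (p - 1) := Nat.choose_pos (by omega)
    by_cases hk' : k ≤ n - p
    · have := krasin_arith_aux n (n - p) k (by omega) hk hk'
      rw [Nat.choose_symm_of_eq_add (show n - (k + k) = (n - p - k) + (p - k) by omega),
        Nat.choose_symm_of_eq_add (show n - 2 = (n - p - 1) + (p - 1) by omega)] at this
      exact this
    · rw [Nat.choose_eq_zero_of_lt (show n - (k + k) < p - k by omega)]
      omega

/-- A bijection preserving a distance also reflects it. -/
lemma krasin_reflect {n : ℕ} (φ : (Fin n → ZMod 2) ≃ (Fin n → ZMod 2)) (j : ℕ)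
    (h : ∀ x y, hammingDist x y = j → hammingDist (φ x) (φ y) = j) (x y : Fin n → ZMod 2) :
    hammingDist (φ x) (φ y) = j ↔ hammingDist x y = j := by
  classical
  refine ⟨fun hxy => ?_, h x y⟩
  let S : Finset ((Fin n → ZMod 2) × (Fin n → ZMod 2)) :=
    Finset.univ.filter fun q => hammingDist q.1 q.2 = j
  have hinj : Function.Injective (Prod.map φ φ) := φ.injective.prodMap φ.injective
  have hsub : S.image (Prod.map φ φ) ⊆ S := by
    intro q hq
    obtain ⟨r, hr, rfl⟩ := Finset.mem_image.1 hq
    simp only [S, Finset.mem_filter, Finset.mem_univ, true_and] at hr ⊢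
    exact h _ _ hr
  have heq : S.image (Prod.map φ φ) = S :=
    Finset.eq_of_subset_of_card_le hsub (Finset.card_image_of_injective _ hinj).ge
  have hm : (φ x, φ y) ∈ S.image (Prod.map φ φ) := by
    rw [heq]; simpa [S] using hxy
  obtain ⟨r, hr, hre⟩ := Finset.mem_image.1 hm
  have : r = (x, y) := hinj hre
  subst this
  simpa [S] using hr

lemma krasin_transfer {n : ℕ} (φ : (Fin n → ZMod 2) ≃ (Fin n → ZMod 2)) (a b : ℕ)
    (ha : ∀ x y, hammingDist (φ x) (φ y) = a ↔ hammingDist x y = a)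
    (hb : ∀ x y, hammingDist (φ x) (φ y) = b ↔ hammingDist x y = b) (x y : Fin n → ZMod 2) :
    (Finset.univ.filter fun z => hammingDist (φ x) z = a ∧ hammingDist z (φ y) = b).card =
    (Finset.univ.filter fun z => hammingDist x z = a ∧ hammingDist z y = b).card := by
  symm
  refine Finset.card_equiv φ ?_
  intro z
  simp [ha, hb]

lemma krasin_two {n p : ℕ} (hp1 : 1 ≤ p) (hpn : p < n)
    (h1 : 2 * p + 1 ≠ n) (h2 : 2 * p ≠ n) (h3 : 2 * p ≠ n + 1)
    (φ : (Fin n → ZMod 2) ≃ (Fin n → ZMod 2))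
    (hp : ∀ x y, hammingDist (φ x) (φ y) = p ↔ hammingDist x y = p) (x y : Fin n → ZMod 2)
    (hxy : hammingDist x y = 2) : hammingDist (φ x) (φ y) = 2 := by
  have ht := krasin_transfer φ p p hp hp x y
  have hc := krasin_count x y 1 1 (p - 1) hxy
  rw [show 1 + (p - 1) = p by omega] at hc
  rw [hc, show Nat.choose (1 + 1) 1 = 2 by decide] at ht
  obtain ⟨z, hz1, hz2⟩ := krasin_exists x y 1 1 (p - 1) hxy (by omega)
  obtain ⟨k, k', l, e1, e2, e3⟩ := krasin_tri (φ x) (φ y) (φ z)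
  rw [(hp x z).2 (by omega)] at e2
  rw [(hp z y).2 (by omega)] at e3
  obtain rfl : k = k' := by omega
  have hle : hammingDist (φ x) (φ y) ≤ n := by
    simpa using hammingDist_le_card_fintype (x := φ x) (y := φ y)
  have hc2 := krasin_count (φ x) (φ y) k k l e1
  rw [← e2, ht, show l = p - k by omega] at hc2
  have hk0 : k ≠ 0 := by
    rintro rfl
    have := φ.injective (hammingDist_eq_zero.1 e1)
    rw [this, hammingDist_self] at hxy
    omega
  by_contra hne
  have := krasin_arith n p k hp1 hpn h1 h2 h3 (by omega) (by omega) (by omega)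
  have h11 : 1 + 1 = 2 := rfl
  rw [h11] at hc2
  omega

/-- `p-2` is preserved. -/
lemma krasin_down {n p : ℕ} (hpn : p < n) (h2 : 2 * p ≠ n) (hp2 : 2 ≤ p)
    (φ : (Fin n → ZMod 2) ≃ (Fin n → ZMod 2))
    (h : ∀ x y, hammingDist (φ x) (φ y) = 2 ↔ hammingDist x y = 2)
    (hp : ∀ x y, hammingDist (φ x) (φ y) = p ↔ hammingDist x y = p) (x y : Fin n → ZMod 2)
    (hxy : hammingDist x y = p - 2) : hammingDist (φ x) (φ y) = p - 2 := by
  have ht := krasin_transfer φ 2 p h hp x y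
  have hc := krasin_count x y 0 (p - 2) 2 (by omega)
  rw [show 0 + 2 = 2 by omega, show p - 2 + 2 = p by omega, Nat.choose_zero_right, one_mul] at hc
  rw [hc] at ht
  obtain ⟨z, hz1, hz2⟩ := krasin_exists x y 0 (p - 2) 2 (by omega) (by omega)
  obtain ⟨i, i', l, e1, e2, e3⟩ := krasin_tri (φ x) (φ y) (φ z)
  rw [(h x z).2 (by omega)] at e2
  rw [(hp z y).2 (by omega)] at e3
  have hpp := hp x y
  have hl : l = 0 ∨ l = 1 ∨ l = 2 := by omega
  rcases hl with rfl | rfl | rfl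
  · exfalso
    have hc2 := krasin_count (φ x) (φ y) i i' 0 e1
    rw [← e2, ← e3, ht, Nat.choose_zero_right, mul_one, show i = 2 by omega,
      show 2 + i' = p + 2 by omega] at hc2
    rw [show n - (0 + (p - 2)) = n - p + 2 by omega] at hc2
    have hmono : ∀ a b : ℕ, a < b → (a + 2).choose 2 < (b + 2).choose 2 := by
      intro a b hab
      have h1 : (a + 2).choose 2 < (a + 3).choose 2 := by
        rw [Nat.choose_succ_succ' (a + 2) 1, Nat.choose_one_right]
        simp only [Nat.reduceAdd]; omega
      exact h1.trans_le (Nat.choose_le_choose 2 (by omega))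
    rcases lt_or_gt_of_ne (show n - p ≠ p by omega) with hlt | hlt
    · have := hmono _ _ hlt; omega
    · have := hmono _ _ hlt; omega
  · omega
  · omega

/-- `q-2` is preserved if `q` and `q+2` are. -/
lemma krasin_down' {n q : ℕ} (hqn : q < n) (hq2 : 2 ≤ q)
    (φ : (Fin n → ZMod 2) ≃ (Fin n → ZMod 2))
    (h : ∀ x y, hammingDist (φ x) (φ y) = 2 ↔ hammingDist x y = 2)
    (hq : ∀ x y, hammingDist (φ x) (φ y) = q ↔ hammingDist x y = q)
    (hq' : ∀ x y, hammingDist (φ x) (φ y) = q + 2 ↔ hammingDist x y = q + 2)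
    (x y : Fin n → ZMod 2)
    (hxy : hammingDist x y = q - 2) : hammingDist (φ x) (φ y) = q - 2 := by
  obtain ⟨z, hz1, hz2⟩ := krasin_exists x y 0 (q - 2) 2 (by omega) (by omega)
  obtain ⟨i, i', l, e1, e2, e3⟩ := krasin_tri (φ x) (φ y) (φ z)
  rw [(h x z).2 (by omega)] at e2
  rw [(hq z y).2 (by omega)] at e3
  have := hq x y
  have := hq' x y
  omega

lemma krasin_one {n : ℕ} (φ : (Fin n → ZMod 2) ≃ (Fin n → ZMod 2))
    (h : ∀ x y, hammingDist (φ x) (φ y) = 2 ↔ hammingDist x y = 2) :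
    ∀ m : ℕ, 2 * m + 1 < n →
      (∀ x y, hammingDist (φ x) (φ y) = 2 * m + 1 ↔ hammingDist x y = 2 * m + 1) →
      (∀ x y, hammingDist (φ x) (φ y) = 2 * m + 3 ↔ hammingDist x y = 2 * m + 3) →
      ∀ x y, hammingDist (φ x) (φ y) = 1 ↔ hammingDist x y = 1 := by
  intro m
  induction m with
  | zero => intro _ h1 _; exact h1
  | succ m ih =>
    intro hm h1 h3
    refine ih (by omega) (krasin_reflect φ _ ?_) ?_
    · exact krasin_down' (q := 2 * (m + 1) + 1) hm (by omega) φ h h1 h3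
    · exact h1

lemma krasin_le_dist {n : ℕ} (φ : (Fin n → ZMod 2) → (Fin n → ZMod 2))
    (h : ∀ x y, hammingDist x y = 1 → hammingDist (φ x) (φ y) = 1) :
    ∀ k x y, hammingDist x y = k → hammingDist (φ x) (φ y) ≤ k := by
  intro k
  induction k with
  | zero => intro x y hxy; rw [hammingDist_eq_zero.1 hxy, hammingDist_self]
  | succ k ih =>
    intro x y hxy
    have hle : hammingDist x y ≤ n := by
      simpa using hammingDist_le_card_fintype (x := x) (y := y)
    obtain ⟨z, hz1, hz2⟩ := krasin_exists x y k 1 0 hxy (by omega)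
    have a1 := ih x z hz1
    have a2 := h z y hz2
    have := hammingDist_triangle (φ x) (φ z) (φ y)
    omega

/-- Krasin's theorem: if `p` is odd with `1 ≤ p ≤ n`, `2p ≠ n-1`, `2p ≠ n`, `2p ≠ n+1`
and `p ≠ n`, then every `p`-isometry of the Boolean cube `C_n` is an isometry. -/
theorem pIsometry_isIsometry_of_odd (n p : ℕ) (hn : 1 ≤ n)
    (hp1 : 1 ≤ p) (hpn : p ≤ n) (hodd : Odd p)
    (h1 : 2 * p + 1 ≠ n) (h2 : 2 * p ≠ n) (h3 : 2 * p ≠ n + 1) (h4 : p ≠ n)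
    (φ : (Fin n → ZMod 2) → Fin n → ZMod 2) (hbij : Function.Bijective φ)
    (hφ : ∀ x y, hammingDist x y = p → hammingDist (φ x) (φ y) = p) :
    ∀ x y, hammingDist (φ x) (φ y) = hammingDist x y := by
  obtain ⟨e, rfl⟩ : ∃ e : (Fin n → ZMod 2) ≃ (Fin n → ZMod 2), φ = e :=
    ⟨Equiv.ofBijective φ hbij, rfl⟩
  have hlt : p < n := by omega
  have hp := krasin_reflect e p hφ
  have htwo := krasin_reflect e 2 (krasin_two hp1 hlt h1 h2 h3 e hp)
  have hone : ∀ x y, hammingDist (e x) (e y) = 1 ↔ hammingDist x y = 1 := by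
    obtain ⟨m, rfl⟩ := hodd
    rcases m with _ | m
    · exact hp
    · have hd := krasin_reflect e _ (krasin_down hlt h2 (by omega) e htwo hp)
      exact krasin_one e htwo m (by omega) hd hp
  intro x y
  apply le_antisymm
  · exact krasin_le_dist e (fun x y => (hone x y).2) _ x y rfl
  · have := krasin_le_dist e.symm (fun x y hxy => (hone _ _).1 (by simpa using hxy)) _
      (e x) (e y) rfl
    simpa using this
end

section
/- Let p be an even integer with 2 ≤ p ≤ n such that 2p ≠ n−1, 2p ≠ n, 2p ≠ n+1 and p ≠ n. Then every p-isometry of C_n is an even isometry. -/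
namespace PIso

lemma cb_mul_le (k q : ℕ) : Nat.centralBinom (k+1) * Nat.centralBinom (q+1) ≤
    2 * Nat.centralBinom (k+q+1) := by
  induction q with
  | zero =>
    have : Nat.centralBinom (0+1) = 2 := by decide
    rw [this]; simp [mul_comm]
  | succ q ih =>
    have e1 := Nat.succ_mul_centralBinom_succ (q+1)
    have e2 := Nat.succ_mul_centralBinom_succ (k+q+1)
    rw [show k + (q+1) + 1 = k+q+1+1 by ring]
    generalize Nat.centralBinom (k+1) = a at *
    generalize Nat.centralBinom (q+1+1) = b' at *
    generalize Nat.centralBinom (q+1) = b at *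
    generalize Nat.centralBinom (k+q+1+1) = c' at *
    generalize Nat.centralBinom (k+q+1) = c at *
    have hpos : 0 < (q+2)*(k+q+2) := by positivity
    refine Nat.le_of_mul_le_mul_left ?_ hpos
    calc (q+2)*(k+q+2)*(a*b') = (k+q+2)*a*((q+1+1)*b') := by ring
      _ = (k+q+2)*(2*(2*(q+1)+1)) * (a*b) := by rw [e1]; ring
      _ ≤ (k+q+2)*(2*(2*(q+1)+1)) * (2*c) := by gcongr
      _ ≤ 2*((q+2)*(2*(2*(k+q+1)+1)*c)) := by
        have : (k+q+2)*(2*(q+1)+1) ≤ (q+2)*(2*(k+q+1)+1) := by nlinarith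
        nlinarith [Nat.mul_le_mul_right c this]
      _ = 2*((q+2)*((k+q+1+1)*c')) := by rw [e2]
      _ = (q+2)*(k+q+2)*(2*c') := by ring

lemma choose_pred (q : ℕ) : (2*(q+1)).choose q * (q+2) = (q+1) * Nat.centralBinom (q+1) := by
  have h := Nat.choose_succ_right_eq (2*(q+1)) q
  rw [Nat.centralBinom, mul_comm (q+1), h]
  congr 1; omega

lemma core (s a t : ℕ) (hs : 1 ≤ s) : (2*(s+1)).choose (s+1) * (2*a+2+t).choose a <
    2 * (2*s+2+2*a+t).choose (s+a) := by
  induction t with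
  | zero =>
    have h1 := choose_pred a
    have h2 := choose_pred (s+a)
    have h3 := cb_mul_le s a
    have hc := Nat.centralBinom_pos (s+a+1)
    rw [show 2*s+2+2*a+0 = 2*(s+a+1) by ring, show 2*a+2+0 = 2*(a+1) by ring]
    rw [show (2*(s+1)).choose (s+1) = Nat.centralBinom (s+1) from rfl]
    generalize Nat.centralBinom (s+1) = x at *
    generalize Nat.centralBinom (a+1) = y at *
    generalize Nat.centralBinom (s+a+1) = z at *
    generalize (2*(a+1)).choose a = A at *
    generalize (2*(s+a+1)).choose (s+a) = B at *
    have hpos : 0 < (a+2)*(s+a+2) := by positivity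
    refine Nat.lt_of_mul_lt_mul_left (a := (a+2)*(s+a+2)) ?_
    calc (a+2)*(s+a+2)*(x*A) = (s+a+2)*x*(A*(a+2)) := by ring
      _ = (s+a+2)*(a+1)*(x*y) := by rw [h1]; ring
      _ ≤ (s+a+2)*(a+1)*(2*z) := by gcongr
      _ < (a+2)*(s+a+1)*(2*z) := by
        have : (s+a+2)*(a+1) < (a+2)*(s+a+1) := by nlinarith
        exact Nat.mul_lt_mul_of_pos_right this (by omega)
      _ = 2*(a+2)*((s+a+1)*z) := by ring
      _ = (a+2)*(s+a+2)*(2*B) := by rw [← h2]; ring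
  | succ t ih =>
    have h1 := Nat.choose_mul_succ_eq (2*a+2+t) a
    have h2 := Nat.choose_mul_succ_eq (2*s+2+2*a+t) (s+a)
    rw [show 2*a+2+t+1-a = a+3+t by omega] at h1
    rw [show 2*s+2+2*a+t+1-(s+a) = s+a+t+3 by omega] at h2
    rw [show 2*a+2+(t+1) = 2*a+2+t+1 by ring, show 2*s+2+2*a+(t+1) = 2*s+2+2*a+t+1 by ring]
    generalize (2*(s+1)).choose (s+1) = x at *
    generalize (2*a+2+t+1).choose a = A' at *
    generalize (2*a+2+t).choose a = A at *
    generalize (2*s+2+2*a+t+1).choose (s+a) = B' at *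
    generalize (2*s+2+2*a+t).choose (s+a) = B at *
    refine Nat.lt_of_mul_lt_mul_left (a := (a+3+t)*(s+a+t+3)) ?_
    calc (a+3+t)*(s+a+t+3)*(x*A') = (s+a+t+3)*x*(A'*(a+3+t)) := by ring
      _ = (s+a+t+3)*(2*a+2+t+1)*(x*A) := by rw [← h1]; ring
      _ < (s+a+t+3)*(2*a+2+t+1)*(2*B) := Nat.mul_lt_mul_of_pos_left ih (by positivity)
      _ ≤ (a+3+t)*(2*s+2+2*a+t+1)*(2*B) := by
        have : (s+a+t+3)*(2*a+2+t+1) ≤ (a+3+t)*(2*s+2+2*a+t+1) := by nlinarith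
        gcongr
      _ = 2*(a+3+t)*(B*(2*s+2+2*a+t+1)) := by ring
      _ = (a+3+t)*(s+a+t+3)*(2*B') := by rw [h2]; ring

lemma core' (n p k : ℕ) (hk : 2 ≤ k) (hkp : k ≤ p) (hn : 2*p+2 ≤ n) :
    (2*k).choose k * (n-2*k).choose (p-k) < 2 * (n-2).choose (p-1) := by
  obtain ⟨s, rfl⟩ : ∃ s, k = s+1 := ⟨k-1, by omega⟩
  obtain ⟨a, rfl⟩ := Nat.exists_eq_add_of_le hkp
  obtain ⟨t, rfl⟩ := Nat.exists_eq_add_of_le hn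
  have := core s a t (by omega)
  rw [show 2*(s+1+a)+2+t-2*(s+1) = 2*a+2+t by omega, show s+1+a-(s+1) = a by omega,
    show 2*(s+1+a)+2+t-2 = 2*s+2+2*a+t by omega, show s+1+a-1 = s+a by omega]
  exact this

lemma numeric (n p k : ℕ) (hp : 2 ≤ p) (hpn : p < n) (h1 : 2 * p + 1 ≠ n) (h2 : 2 * p ≠ n)
    (h3 : 2 * p ≠ n + 1) (hk : 2 ≤ k) (hkp : k ≤ p) (hkn : 2*k ≤ n) :
    (2*k).choose k * (n-2*k).choose (p-k) < 2 * (n-2).choose (p-1) := by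
  by_cases hc : 2*p+2 ≤ n
  · exact core' n p k hk hkp hc
  · by_cases hk2 : k ≤ n-p
    · have := core' n (n-p) k hk hk2 (by omega)
      rw [← Nat.choose_symm (show p-k ≤ n-2*k by omega),
        ← Nat.choose_symm (show p-1 ≤ n-2 by omega),
        show n-2*k-(p-k) = n-p-k by omega, show n-2-(p-1) = n-p-1 by omega]
      exact this
    · rw [Nat.choose_eq_zero_of_lt (show n-2*k < p-k by omega)]
      have := Nat.choose_pos (show p-1 ≤ n-2 by omega)
      omega

open Finset

lemma zm (a b c : ZMod 2) : b ≠ c ↔ ((a ≠ b) ↔ ¬ (a ≠ c)) := by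
  revert a b c; decide

lemma zm1 (a : ZMod 2) : a ≠ a + 1 := by revert a; decide
lemma zm2 (a b : ZMod 2) (h : a ≠ b) : a + 1 = b := by revert a b; decide

variable {n : ℕ}

lemma split1 (x y z : Fin n → ZMod 2) : hammingDist x z =
    #{i | x i ≠ y i ∧ x i ≠ z i} + #{i | ¬ x i ≠ y i ∧ x i ≠ z i} := by
  unfold hammingDist
  rw [← card_filter_add_card_filter_not (s := ({i | x i ≠ z i} : Finset (Fin n)))
    (fun i => x i ≠ y i), filter_filter, filter_filter]
  congr 2 <;> (ext i; simp; try tauto)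

lemma split2 (x y z : Fin n → ZMod 2) : hammingDist y z =
    #{i | x i ≠ y i ∧ ¬ x i ≠ z i} + #{i | ¬ x i ≠ y i ∧ x i ≠ z i} := by
  unfold hammingDist
  rw [← card_filter_add_card_filter_not (s := ({i | y i ≠ z i} : Finset (Fin n)))
    (fun i => x i ≠ y i), filter_filter, filter_filter]
  congr 2 <;> (ext i; have := zm (x i) (y i) (z i); simp only [mem_filter]; tauto)

lemma split3 (x y z : Fin n → ZMod 2) : hammingDist x y =
    #{i | x i ≠ y i ∧ x i ≠ z i} + #{i | x i ≠ y i ∧ ¬ x i ≠ z i} := by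
  unfold hammingDist
  rw [← card_filter_add_card_filter_not (s := ({i | x i ≠ y i} : Finset (Fin n)))
    (fun i => x i ≠ z i), filter_filter, filter_filter]

def nb (p : ℕ) (x y : Fin n → ZMod 2) : Finset (Fin n → ZMod 2) :=
  {z | hammingDist x z = p ∧ hammingDist y z = p}

lemma mem_nb {p : ℕ} {x y z : Fin n → ZMod 2} : z ∈ nb p x y ↔
    hammingDist x z = p ∧ hammingDist y z = p := by simp [nb]

/-- If there is a common neighbour, the distance is `2 k` with `k ≤ p`. -/
lemma nb_even {p : ℕ} {x y z : Fin n → ZMod 2} (h : z ∈ nb p x y) :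
    ∃ k ≤ p, hammingDist x y = 2 * k := by
  rw [mem_nb] at h
  have h1 := split1 x y z
  have h2 := split2 x y z
  have h3 := split3 x y z
  exact ⟨#{i | x i ≠ y i ∧ x i ≠ z i}, by omega, by omega⟩

lemma card_nb {p k : ℕ} {x y : Fin n → ZMod 2} (hk : hammingDist x y = 2 * k) (hkp : k ≤ p) :
    #(nb p x y) = (2*k).choose k * (n-2*k).choose (p-k) := by
  set D : Finset (Fin n) := {i | x i ≠ y i} with hD
  have hDc : #D = 2*k := hk
  have hDc' : #Dᶜ = n - 2*k := by rw [card_compl, hDc, Fintype.card_fin]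
  rw [← hDc', ← hDc, ← card_powersetCard, ← card_powersetCard, ← card_product]
  refine card_nbij' (fun z => (({i | x i ≠ y i ∧ x i ≠ z i} : Finset (Fin n)),
      ({i | ¬ x i ≠ y i ∧ x i ≠ z i} : Finset (Fin n))))
    (fun P i => if i ∈ P.1 ∪ P.2 then x i + 1 else x i) ?_ ?_ ?_ ?_
  · intro z hz
    rw [mem_coe, mem_nb] at hz
    have h1 := split1 x y z
    have h2 := split2 x y z
    have h3 := split3 x y z
    simp only [mem_coe, mem_product, mem_powersetCard]
    refine ⟨⟨?_, by omega⟩, ?_, by omega⟩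
    · intro i; simp [hD]; tauto
    · intro i; simp [hD]; tauto
  · rintro ⟨A, B⟩ hP
    simp only [mem_coe, mem_product, mem_powersetCard] at hP
    obtain ⟨⟨hA, hAc⟩, hB, hBc⟩ := hP
    rw [mem_coe, mem_nb]
    set z : Fin n → ZMod 2 := fun i => if i ∈ A ∪ B then x i + 1 else x i with hz
    have hxz : ∀ i, x i ≠ z i ↔ i ∈ A ∨ i ∈ B := by
      intro i
      by_cases h : i ∈ A ∪ B
      · simp only [hz, h, if_true]; exact ⟨fun _ => mem_union.1 h, fun _ => zm1 _⟩
      · simp only [hz, h, if_false]; rw [mem_union] at h; simp [h]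
    have hA' : ∀ i, i ∈ A → x i ≠ y i := fun i h => by simpa [hD] using hA h
    have hB' : ∀ i, i ∈ B → ¬ x i ≠ y i := fun i h => by simpa [hD] using hB h
    have h1 := split1 x y z
    have h2 := split2 x y z
    have h3 := split3 x y z
    have e1 : ({i | x i ≠ y i ∧ x i ≠ z i} : Finset (Fin n)) = A := by
      ext i
      have := hxz i; have := hA' i; have := hB' i
      simp only [mem_filter, mem_univ, true_and]; tauto
    have e2 : ({i | ¬ x i ≠ y i ∧ x i ≠ z i} : Finset (Fin n)) = B := by
      ext i
      have := hxz i; have := hA' i; have := hB' i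
      simp only [mem_filter, mem_univ, true_and]; tauto
    rw [e1] at h1 h3
    rw [e2] at h1 h2
    change hammingDist x z = p ∧ hammingDist y z = p
    omega
  · intro z _
    funext i
    by_cases h : x i = z i
    · simp [h]
    · have := zm2 _ _ h
      have h' : x i = y i ∨ x i ≠ y i := em _
      simp only [mem_union, mem_filter, mem_univ, true_and]
      rw [if_pos (by tauto)]; exact this
  · rintro ⟨A, B⟩ hP
    simp only [mem_coe, mem_product, mem_powersetCard] at hP
    obtain ⟨⟨hA, hAc⟩, hB, hBc⟩ := hP
    have hA' : ∀ i, i ∈ A → x i ≠ y i := fun i h => by simpa [hD] using hA h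
    have hB' : ∀ i, i ∈ B → ¬ x i ≠ y i := fun i h => by simpa [hD] using hB h
    have hxz : ∀ i, x i ≠ (if i ∈ A ∪ B then x i + 1 else x i) ↔ i ∈ A ∨ i ∈ B := by
      intro i
      by_cases h : i ∈ A ∪ B
      · simp only [h, if_true]; exact ⟨fun _ => mem_union.1 h, fun _ => zm1 _⟩
      · simp only [h, if_false]; rw [mem_union] at h; simp [h]
    refine Prod.ext ?_ ?_
    · ext i
      have := hxz i; have := hA' i; have := hB' i
      simp only [mem_filter, mem_univ, true_and]; tauto
    · ext i
      have := hxz i; have := hA' i; have := hB' i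
      simp only [mem_filter, mem_univ, true_and]; tauto

/-- On a finite set, a bijection preserving a distance also reflects it. -/
lemma reflects (p : ℕ) (φ : (Fin n → ZMod 2) → Fin n → ZMod 2) (hbij : Function.Bijective φ)
    (hφ : ∀ x y, hammingDist x y = p → hammingDist (φ x) (φ y) = p) (x y : Fin n → ZMod 2)
    (h : hammingDist (φ x) (φ y) = p) : hammingDist x y = p := by
  let S : Finset ((Fin n → ZMod 2) × (Fin n → ZMod 2)) := {q | hammingDist q.1 q.2 = p}
  have hinj : Function.Injective (Prod.map φ φ) := hbij.1.prodMap hbij.1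
  have hsub : S.image (Prod.map φ φ) ⊆ S := by
    intro q hq
    obtain ⟨r, hr, rfl⟩ := mem_image.1 hq
    simp only [S, mem_filter, mem_univ, true_and] at hr ⊢
    exact hφ _ _ hr
  have heq := eq_of_subset_of_card_le hsub (by rw [card_image_of_injective _ hinj])
  have hm : Prod.map φ φ (x, y) ∈ S := by simpa [S] using h
  rw [← heq] at hm
  obtain ⟨r, hr, hrr⟩ := mem_image.1 hm
  have := hinj hrr
  subst this
  simpa [S] using hr

lemma two_le (φ : (Fin n → ZMod 2) → Fin n → ZMod 2)
    (hφ : ∀ x y, hammingDist x y = 2 → hammingDist (φ x) (φ y) = 2) (k : ℕ) :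
    ∀ x y, hammingDist x y = 2 * k → hammingDist (φ x) (φ y) ≤ 2 * k ∧ Even (hammingDist (φ x) (φ y)) := by
  induction k with
  | zero =>
    intro x y h
    have : x = y := by simpa using h
    subst this; simp
  | succ k ih =>
    intro x y h
    obtain ⟨A, hA, hAc⟩ := exists_subset_card_eq
      (show 2 ≤ #({i | x i ≠ y i} : Finset (Fin n)) by
        change 2 ≤ hammingDist x y; omega)
    let z : Fin n → ZMod 2 := fun i => if i ∈ A then y i else x i
    have hA' : ∀ i, i ∈ A → x i ≠ y i := fun i h => by simpa using hA h
    have e1 : hammingDist x z = 2 := by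
      refine Eq.trans ?_ hAc
      unfold hammingDist
      congr 1; ext i
      by_cases hi : i ∈ A
      · simpa [z, hi] using hA' i hi
      · simp [z, hi]
    have e2 : hammingDist z y = 2 * k := by
      have hh := card_sdiff_add_card_eq_card hA
      have : hammingDist z y = #(({i | x i ≠ y i} : Finset (Fin n)) \ A) := by
        unfold hammingDist
        congr 1; ext i
        by_cases hi : i ∈ A
        · simp [z, hi]
        · simp [z, hi]
      have h' : #({i | x i ≠ y i} : Finset (Fin n)) = 2 * (k+1) := h
      omega
    have := hammingDist_triangle (φ x) (φ z) (φ y)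
    have := hφ _ _ e1
    obtain ⟨i1, m, i2⟩ := ih _ _ e2
    have h1 := split1 (φ x) (φ z) (φ y)
    have h2 := split2 (φ x) (φ z) (φ y)
    have h3 := split3 (φ x) (φ z) (φ y)
    exact ⟨by omega, by rw [Nat.even_iff]; omega⟩

end PIso

open PIso in
/-- If `p` is even with `2 ≤ p ≤ n`, `2p ≠ n-1`, `2p ≠ n`, `2p ≠ n+1` and `p ≠ n`,
then every `p`-isometry of the Boolean cube `C_n` is an even isometry. -/
theorem pIsometry_isEvenIsometry_of_even (n p : ℕ) (hn : 1 ≤ n)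
    (hp1 : 2 ≤ p) (hpn : p ≤ n) (heven : Even p)
    (h1 : 2 * p + 1 ≠ n) (h2 : 2 * p ≠ n) (h3 : 2 * p ≠ n + 1) (h4 : p ≠ n)
    (φ : (Fin n → ZMod 2) → Fin n → ZMod 2) (hbij : Function.Bijective φ)
    (hφ : ∀ x y, hammingDist x y = p → hammingDist (φ x) (φ y) = p) :
    ∀ x y, Even (hammingDist x y) → hammingDist (φ x) (φ y) = hammingDist x y := by
  have hiff : ∀ x y, hammingDist (φ x) (φ y) = p ↔ hammingDist x y = p :=
    fun x y => ⟨reflects p φ hbij hφ x y, hφ x y⟩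
  have hcard : ∀ x y, (nb p (φ x) (φ y)).card = (nb p x y).card := by
    intro x y
    symm
    refine Finset.card_bij (fun z _ => φ z) ?_ (fun _ _ _ _ h => hbij.1 h) ?_
    · intro z hz
      rw [mem_nb] at hz ⊢
      rwa [hiff, hiff]
    · intro w hw
      obtain ⟨z, rfl⟩ := hbij.2 w
      refine ⟨z, ?_, rfl⟩
      rw [mem_nb] at hw ⊢
      rwa [hiff, hiff] at hw
  have htwo : ∀ x y, hammingDist x y = 2 → hammingDist (φ x) (φ y) = 2 := by
    intro x y hxy
    have hc := card_nb (p := p) (k := 1) (x := x) (y := y) (by omega) (by omega)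
    have hpos := Nat.choose_pos (show p-1 ≤ n-2 by omega)
    simp only [mul_one, Nat.choose_one_right] at hc
    have hc' := hcard x y
    have hne : (nb p (φ x) (φ y)).Nonempty := by
      rw [← Finset.card_pos]; omega
    obtain ⟨z, hz⟩ := hne
    obtain ⟨k, hkp, hk⟩ := nb_even hz
    have hck := card_nb hk hkp
    have hkn : hammingDist (φ x) (φ y) ≤ n := by
      simpa using hammingDist_le_card_fintype (x := φ x) (y := φ y)
    have hk0 : k ≠ 0 := by
      rintro rfl
      have h0 : φ x = φ y := by simpa using hk
      have := hbij.1 h0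
      subst this
      simp at hxy
    by_cases hk2 : 2 ≤ k
    · have := numeric n p k hp1 (by omega) h1 h2 h3 hk2 hkp (by omega)
      omega
    · omega
  obtain ⟨ψ, hl, hr⟩ := Function.bijective_iff_has_inverse.1 hbij
  have htwo' : ∀ x y, hammingDist x y = 2 → hammingDist (ψ x) (ψ y) = 2 := by
    intro x y hxy
    apply reflects 2 φ hbij htwo
    rwa [hr, hr]
  intro x y ⟨m, hm⟩
  obtain ⟨a1, l, hl'⟩ := two_le φ htwo m x y (by omega)
  have ⟨a2, _⟩ := two_le ψ htwo' l (φ x) (φ y) (by omega)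
  rw [hl, hl] at a2
  omega
end

section
/- Let P be a nonempty subset of {1,...,n} and let φ be a P-isometry of C_n. Then at least one of the following holds: φ is an isometry; φ is an even isometry; φ is an {n}-isometry; n is even and φ is an {n/2, n}-isometry; n is odd and φ is an {(n+1)/2}-isometry; n is odd and φ is an {(n−1)/2, (n+1)/2, n}-isometry. -/
namespace WeakIso

abbrev C (n : ℕ) := Fin n → ZMod 2

/-- `φ` preserves the relation `Q`, in both directions. -/
def Pres {n : ℕ} (φ : C n ≃ C n) (Q : C n → C n → Prop) : Prop :=
  ∀ x y, Q (φ x) (φ y) ↔ Q x y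

lemma pres_of_imp {n : ℕ} (φ : C n ≃ C n) (Q : C n → C n → Prop)
    (h : ∀ x y, Q x y → Q (φ x) (φ y)) : Pres φ Q := by
  classical
  let S : Finset (C n × C n) := Finset.univ.filter fun q => Q q.1 q.2
  have hsub : S.map (φ.prodCongr φ).toEmbedding ⊆ S := by
    intro q hq
    simp only [Finset.mem_map, S, Finset.mem_filter, Finset.mem_univ, true_and] at hq ⊢
    obtain ⟨a, ha, rfl⟩ := hq
    exact h _ _ ha
  have heq := Finset.eq_of_subset_of_card_le hsub (by simp)
  intro x y
  refine ⟨fun hq => ?_, h x y⟩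
  have hm : (φ x, φ y) ∈ S := by simp [S, hq]
  rw [← heq] at hm
  simp only [Finset.mem_map, S, Finset.mem_filter, Finset.mem_univ, true_and] at hm
  obtain ⟨a, ha, hb⟩ := hm
  have h1 : φ a.1 = φ x := congrArg Prod.fst hb
  have h2 : φ a.2 = φ y := congrArg Prod.snd hb
  rw [φ.injective h1, φ.injective h2] at ha
  exact ha

lemma pres_comp {n : ℕ} {φ : C n ≃ C n} {Q R : C n → C n → Prop}
    (hQ : Pres φ Q) (hR : Pres φ R) : Pres φ (fun x y => ∃ z, Q x z ∧ R z y) := by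
  intro x y
  constructor
  · rintro ⟨z, h1, h2⟩
    refine ⟨φ.symm z, ?_, ?_⟩
    · rw [← hQ]; simpa using h1
    · rw [← hR]; simpa using h2
  · rintro ⟨z, h1, h2⟩
    exact ⟨φ z, (hQ _ _).2 h1, (hR _ _).2 h2⟩

lemma pres_congr {n : ℕ} {φ : C n ≃ C n} {Q R : C n → C n → Prop}
    (hQ : Pres φ Q) (h : ∀ x y, R x y ↔ Q x y) : Pres φ R := by
  intro x y
  rw [h, h, hQ]

lemma dist_eq_sum {n : ℕ} (x y : C n) :
    hammingDist x y = ∑ i, if x i ≠ y i then 1 else 0 := by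
  simp [hammingDist, Finset.card_filter]

lemma z2 (a b : ZMod 2) (h : a ≠ b) : b = a + 1 := by
  revert a b; decide

lemma z2' (a b c : ZMod 2) (h : a ≠ b) : (b ≠ c ↔ a = c) := by
  revert a b c; decide

lemma z2'' (a : ZMod 2) : a ≠ a + 1 := by
  revert a; decide

lemma dist_triple {n : ℕ} (x y z : C n) :
    ∃ t ≤ n, hammingDist x y + hammingDist x z + hammingDist z y = 2 * t := by
  refine ⟨∑ i, if x i = y i ∧ x i = z i then 0 else 1, ?_, ?_⟩
  · calc _ ≤ ∑ i : Fin n, 1 := Finset.sum_le_sum (fun i _ => by split_ifs <;> simp)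
      _ = n := by simp
  · simp only [dist_eq_sum, ← Finset.sum_add_distrib, Finset.mul_sum]
    refine Finset.sum_congr rfl fun i _ => ?_
    generalize x i = a
    generalize y i = b
    generalize z i = c
    revert a b c; decide

def flip {n : ℕ} (y : C n) (S : Finset (Fin n)) : C n :=
  fun i => if i ∈ S then y i + 1 else y i

lemma dist_flip {n : ℕ} (y : C n) (S : Finset (Fin n)) :
    hammingDist (flip y S) y = S.card := by
  rw [hammingDist]
  congr 1
  ext i
  have := z2'' (y i)
  by_cases h : i ∈ S <;> simp [flip, h]

lemma dist_flip_univ {n : ℕ} (x y : C n) :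
    hammingDist x (flip y Finset.univ) + hammingDist x y = n := by
  simp only [dist_eq_sum, ← Finset.sum_add_distrib]
  trans ∑ i : Fin n, 1
  · refine Finset.sum_congr rfl fun i _ => ?_
    simp only [flip, Finset.mem_univ, if_true]
    generalize x i = a
    generalize y i = b
    revert a b; decide
  · simp

lemma exists_down {n : ℕ} (x y : C n) (h : 2 ≤ hammingDist x y) :
    ∃ z, hammingDist x z + 2 = hammingDist x y ∧ hammingDist z y = 2 := by
  obtain ⟨S, hS, hc⟩ := Finset.exists_subset_card_eq
    (s := Finset.univ.filter fun i => x i ≠ y i) (n := 2) h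
  refine ⟨flip y S, ?_, by rw [dist_flip, hc]⟩
  suffices hammingDist x (flip y S) + S.card = hammingDist x y by omega
  simp only [dist_eq_sum]
  have hc' : S.card = ∑ i, if i ∈ S then 1 else 0 := by simp
  rw [hc', ← Finset.sum_add_distrib]
  refine Finset.sum_congr rfl fun i _ => ?_
  by_cases hi : i ∈ S
  · have hi' : x i ≠ y i := by simpa using hS hi
    have : x i = y i + 1 := z2 _ _ hi'.symm
    simp [flip, hi, this]
  · simp [flip, hi]

lemma exists_up {n : ℕ} (x y : C n) (h : hammingDist x y + 2 ≤ n) :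
    ∃ z, hammingDist x z = hammingDist x y + 2 ∧ hammingDist z y = 2 := by
  have hd := dist_flip_univ x y
  obtain ⟨z, h1, h2⟩ := exists_down x (flip y Finset.univ) (by omega)
  refine ⟨flip z Finset.univ, ?_, ?_⟩
  · have := dist_flip_univ x z
    omega
  · have h3 := dist_flip_univ y z
    have h4 := dist_flip_univ z y
    rw [hammingDist_comm y z] at h3
    rw [hammingDist_comm _ y]
    omega

lemma card_common {n : ℕ} (p k : ℕ) (x y : C n) (hd : hammingDist x y = 2 * k) (hk : k ≤ p) :
    (Finset.univ.filter fun z => hammingDist x z = p ∧ hammingDist y z = p).card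
      = (2 * k).choose k * (n - 2 * k).choose (p - k) := by
  classical
  set D : Finset (Fin n) := Finset.univ.filter fun i => x i ≠ y i with hD
  have hDc : D.card = 2 * k := hd
  have hDc' : Dᶜ.card = n - 2 * k := by rw [Finset.card_compl, hDc, Fintype.card_fin]
  have e1 : ∀ z : C n, hammingDist x z =
      (D.filter fun i => x i ≠ z i).card + (Dᶜ.filter fun i => x i ≠ z i).card := by
    intro z
    simp only [dist_eq_sum, Finset.card_filter]
    rw [Finset.sum_add_sum_compl]
  have e2 : ∀ z : C n, hammingDist y z + (D.filter fun i => x i ≠ z i).card =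
      2 * k + (Dᶜ.filter fun i => x i ≠ z i).card := by
    intro z
    rw [← hDc, Finset.card_eq_sum_ones D]
    simp only [dist_eq_sum, Finset.card_filter]
    rw [← Finset.sum_add_sum_compl D, add_right_comm, ← Finset.sum_add_distrib]
    congr 1
    · refine Finset.sum_congr rfl fun i hi => ?_
      have hi' : x i ≠ y i := by simpa [hD] using hi
      revert hi'
      generalize x i = a
      generalize y i = b
      generalize z i = c
      revert a b c; decide
    · refine Finset.sum_congr rfl fun i hi => ?_
      have hi' : x i = y i := by simpa [hD] using hi
      rw [hi']
  have : (2 * k).choose k * (n - 2 * k).choose (p - k) =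
      (D.powersetCard k ×ˢ Dᶜ.powersetCard (p - k)).card := by
    rw [Finset.card_product, Finset.card_powersetCard, Finset.card_powersetCard, hDc, hDc']
  rw [this]
  refine Finset.card_nbij' (fun z => (D.filter fun i => x i ≠ z i, Dᶜ.filter fun i => x i ≠ z i))
    (fun q => flip x (q.1 ∪ q.2)) ?_ ?_ ?_ ?_
  · intro z hz
    have hz' : hammingDist x z = p ∧ hammingDist y z = p := by simpa using hz
    have h1 := e1 z
    have h2 := e2 z
    simp only [Finset.coe_product, Set.mem_prod, Finset.mem_coe, Finset.mem_powersetCard]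
    refine ⟨⟨Finset.filter_subset _ _, by omega⟩, Finset.filter_subset _ _, by omega⟩
  · rintro ⟨A, B⟩ hq
    simp only [Finset.coe_product, Set.mem_prod, Finset.mem_coe, Finset.mem_powersetCard] at hq
    obtain ⟨⟨hA, hAc⟩, hB, hBc⟩ := hq
    have f1 : (D.filter fun i => x i ≠ flip x (A ∪ B) i) = A := by
      ext i
      have := @hA i
      have := @hB i
      have := z2'' (x i)
      simp only [Finset.mem_compl] at *
      by_cases h1 : i ∈ A <;> by_cases h2 : i ∈ B <;> simp_all [flip]
    have f2 : (Dᶜ.filter fun i => x i ≠ flip x (A ∪ B) i) = B := by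
      ext i
      have := @hA i
      have := @hB i
      have := z2'' (x i)
      simp only [Finset.mem_compl] at *
      by_cases h1 : i ∈ A <;> by_cases h2 : i ∈ B <;> simp_all [flip]
    have h1 := e1 (flip x (A ∪ B))
    have h2 := e2 (flip x (A ∪ B))
    rw [f1, f2] at h1 h2
    simp only [Finset.coe_filter, Finset.mem_univ, true_and, Set.mem_setOf_eq]
    omega
  · intro z _
    ext i
    by_cases hi : i ∈ D <;> by_cases h : x i = z i <;> simp [flip, hi, h]
    · exact (z2 _ _ h).symm
    · exact (z2 _ _ h).symm
  · rintro ⟨A, B⟩ hq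
    simp only [Finset.coe_product, Set.mem_prod, Finset.mem_coe, Finset.mem_powersetCard] at hq
    obtain ⟨⟨hA, hAc⟩, hB, hBc⟩ := hq
    simp only [Prod.mk.injEq]
    constructor <;>
    · ext i
      have := @hA i
      have := @hB i
      have := z2'' (x i)
      simp only [Finset.mem_compl] at *
      by_cases h1 : i ∈ A <;> by_cases h2 : i ∈ B <;> simp_all [flip]

/-- number of common `p`-neighbours -/
def N {n : ℕ} (p : ℕ) (x y : C n) : ℕ :=
  (Finset.univ.filter fun z => hammingDist x z = p ∧ hammingDist y z = p).card

lemma N_pos {n p : ℕ} {x y : C n} (h : 0 < N p x y) :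
    ∃ k, hammingDist x y = 2 * k ∧ k ≤ p ∧ k ≤ n - p ∧
      N p x y = (2 * k).choose k * (n - 2 * k).choose (p - k) := by
  obtain ⟨z, hz⟩ := Finset.card_pos.1 h
  simp only [Finset.mem_filter, Finset.mem_univ, true_and] at hz
  obtain ⟨t, ht, he⟩ := dist_triple x y z
  have htri := hammingDist_triangle x z y
  rw [hammingDist_comm z y] at he htri
  refine ⟨t - p, by omega, by omega, by omega, ?_⟩
  exact card_common p (t - p) x y (by omega) (by omega)

lemma N_pres {n p : ℕ} {φ : C n ≃ C n} (h : Pres φ fun x y => hammingDist x y = p)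
    (x y : C n) : N p (φ x) (φ y) = N p x y := by
  symm
  refine Finset.card_equiv φ fun z => ?_
  simp only [Finset.mem_filter, Finset.mem_univ, true_and]
  exact (and_congr (h x z) (h y z)).symm

open Nat in
lemma cb_step {i j : ℕ} (h : i < j) :
    centralBinom (i + 1) * centralBinom j < centralBinom i * centralBinom (j + 1) := by
  have h1 := succ_mul_centralBinom_succ i
  have h2 := succ_mul_centralBinom_succ j
  have p1 := centralBinom_pos i
  have p2 := centralBinom_pos j
  have key : (i + 1) * (j + 1) * (centralBinom (i + 1) * centralBinom j)
      < (i + 1) * (j + 1) * (centralBinom i * centralBinom (j + 1)) := by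
    calc (i + 1) * (j + 1) * (centralBinom (i + 1) * centralBinom j)
        = ((i + 1) * centralBinom (i + 1)) * ((j + 1) * centralBinom j) := by ring
      _ = (2 * (2 * i + 1) * (j + 1)) * (centralBinom i * centralBinom j) := by rw [h1]; ring
      _ < (2 * (2 * j + 1) * (i + 1)) * (centralBinom i * centralBinom j) := by
          apply Nat.mul_lt_mul_of_pos_right _ (Nat.mul_pos p1 p2)
          nlinarith
      _ = ((j + 1) * centralBinom (j + 1)) * ((i + 1) * centralBinom i) := by rw [h2]; ring
      _ = _ := by ring
  exact lt_of_mul_lt_mul_left key (Nat.zero_le _)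

open Nat in
lemma cb_lt (a t j : ℕ) (h : a + t + 1 ≤ j) :
    centralBinom (a + t + 1) * centralBinom j < centralBinom a * centralBinom (j + t + 1) := by
  induction t generalizing j with
  | zero => exact cb_step (by omega)
  | succ t ih =>
    have h1 := cb_step (i := a + t + 1) (j := j) (by omega)
    have h2 := ih (j + 1) (by omega)
    have e : j + 1 + t + 1 = j + (t + 1) + 1 := by ring
    rw [e] at h2
    exact h1.trans h2

open Nat in
lemma cb_lt' (a i j m : ℕ) (hi : a < i) (hj : a < j) (hm : a + m = i + j) :
    centralBinom i * centralBinom j < centralBinom a * centralBinom m := by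
  rcases le_total i j with h | h
  · have := cb_lt a (i - a - 1) j (by omega)
    rwa [show a + (i - a - 1) + 1 = i by omega, show j + (i - a - 1) + 1 = m by omega] at this
  · have := cb_lt a (j - a - 1) i (by omega)
    rw [show a + (j - a - 1) + 1 = j by omega, show i + (j - a - 1) + 1 = m by omega] at this
    rwa [mul_comm]

open Nat in
lemma odd_choose (m : ℕ) : 2 * (2 * m + 1).choose m = centralBinom (m + 1) := by
  rw [centralBinom, show 2 * (m + 1) = 2 * m + 1 + 1 by ring, Nat.choose_succ_succ,
    Nat.choose_symm_half]
  ring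

/-- `F p q k`: number of common `p`-neighbours of two points at distance `2k`, `n = p + q`. -/
def F (p q k : ℕ) : ℕ := (2 * k).choose k * (p + q - 2 * k).choose (p - k)

open Nat in
lemma F_half (p k : ℕ) (hk : k ≤ p) :
    2 * F p (p + 1) k = centralBinom k * centralBinom (p + 1 - k) := by
  obtain ⟨m, rfl⟩ := Nat.exists_eq_add_of_le hk
  rw [F, show k + m + (k + m + 1) - 2 * k = 2 * m + 1 by omega, show k + m - k = m by omega,
    show k + m + 1 - k = m + 1 by omega, ← odd_choose, centralBinom]
  ring

lemma F_half_lt (p k : ℕ) (hk : 2 ≤ k) (hkp : k < p) : F p (p + 1) k < F p (p + 1) 1 := by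
  have h1 := F_half p k (by omega)
  have h2 := F_half p 1 (by omega)
  have := cb_lt' 1 k (p + 1 - k) (p + 1 - 1) (by omega) (by omega) (by omega)
  omega

lemma F_half_eq (p : ℕ) (hp : 1 ≤ p) : F p (p + 1) p = F p (p + 1) 1 := by
  have h1 := F_half p p (by omega)
  have h2 := F_half p 1 (by omega)
  have e : p + 1 - p = 1 := by omega
  have e' : p + 1 - 1 = p := by omega
  rw [e, mul_comm] at h1
  rw [e'] at h2
  rw [mul_comm (Nat.centralBinom 1)] at h2
  rw [mul_comm] at h1
  rw [mul_comm 2 (F p (p+1) 1)] at h2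
  omega

lemma F_succ (p q k : ℕ) (hk : k ≤ p) (hq : k ≤ q) :
    (q + 1 - k) * F p (q + 1) k = (p + q + 1 - 2 * k) * F p q k := by
  obtain ⟨a, rfl⟩ := Nat.exists_eq_add_of_le hk
  obtain ⟨b, rfl⟩ := Nat.exists_eq_add_of_le hq
  rw [F, F, show k + b + 1 - k = b + 1 by omega, show k + a + (k + b + 1) - 2 * k = a + b + 1 by omega,
    show k + a - k = a by omega, show k + a + (k + b) + 1 - 2 * k = a + b + 1 by omega,
    show k + a + (k + b) - 2 * k = a + b by omega]
  have := Nat.add_one_mul_choose_eq (a + b) b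
  have s1 : (a + b + 1).choose a = (a + b + 1).choose (b + 1) := by
    rw [show a + b + 1 = a + (b + 1) by ring, Nat.choose_symm_add]
  have s2 : (a + b).choose a = (a + b).choose b := Nat.choose_symm_add
  rw [s1, s2]
  calc _ = (2 * k).choose k * ((a + b + 1).choose (b + 1) * (b + 1)) := by ring
    _ = _ := by rw [← this]; ring

lemma F_pos (p q k : ℕ) (hk : k ≤ p) (hq : k ≤ q) : 0 < F p q k :=
  Nat.mul_pos (Nat.choose_pos (by omega)) (Nat.choose_pos (by omega))

lemma F_lt (p t k : ℕ) (hk : 2 ≤ k) (hkp : k ≤ p) : F p (p + 2 + t) k < F p (p + 2 + t) 1 := by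
  have step : ∀ q, p ≤ q → F p q k ≤ F p q 1 → F p (q + 1) k < F p (q + 1) 1 := by
    intro q hq h
    have h1 := F_succ p q k hkp (by omega)
    have h2 := F_succ p q 1 (by omega) (by omega)
    have hpos := F_pos p q 1 (by omega) (by omega)
    obtain ⟨c, rfl⟩ := Nat.exists_eq_add_of_le hk
    obtain ⟨a, rfl⟩ := Nat.exists_eq_add_of_le hkp
    obtain ⟨b, rfl⟩ := Nat.exists_eq_add_of_le hq
    rw [show 2 + c + a + b + 1 - (2 + c) = a + b + 1 by omega,
      show 2 + c + a + (2 + c + a + b) + 1 - 2 * (2 + c) = 2 * a + b + 1 by omega] at h1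
    rw [show 2 + c + a + b + 1 - 1 = c + a + b + 2 by omega,
      show 2 + c + a + (2 + c + a + b) + 1 - 2 * 1 = 2 * c + 2 * a + b + 3 by omega] at h2
    generalize F (2 + c + a) (2 + c + a + b + 1) (2 + c) = X at *
    generalize F (2 + c + a) (2 + c + a + b + 1) 1 = Y at *
    generalize F (2 + c + a) (2 + c + a + b) (2 + c) = X' at *
    generalize F (2 + c + a) (2 + c + a + b) 1 = Y' at *
    refine lt_of_mul_lt_mul_left (a := (a + b + 1) * (c + a + b + 2)) ?_ (Nat.zero_le _)
    calc (a + b + 1) * (c + a + b + 2) * X = (c + a + b + 2) * ((a + b + 1) * X) := by ring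
      _ = ((c + a + b + 2) * (2 * a + b + 1)) * X' := by rw [h1]; ring
      _ ≤ ((c + a + b + 2) * (2 * a + b + 1)) * Y' := Nat.mul_le_mul_left _ h
      _ < ((a + b + 1) * (2 * c + 2 * a + b + 3)) * Y' := by
          apply Nat.mul_lt_mul_of_pos_right _ hpos
          nlinarith [Nat.zero_le (c * b), Nat.zero_le (c * a), Nat.zero_le (a * b)]
      _ = (a + b + 1) * ((c + a + b + 2) * Y) := by rw [h2]; ring
      _ = _ := by ring
  induction t with
  | zero =>
    refine step (p + 1) (by omega) ?_
    rcases Nat.lt_or_ge k p with h | h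
    · exact (F_half_lt p k hk h).le
    · rw [show k = p by omega]; exact (F_half_eq p (by omega)).le
  | succ t ih => exact step (p + 2 + t) (by omega) ih.le

lemma F_symm (p q k : ℕ) (hk : k ≤ p) (hq : k ≤ q) : F p q k = F q p k := by
  rw [F, F, add_comm q p, Nat.choose_symm_of_eq_add (n := p + q - 2 * k) (a := p - k) (b := q - k)
    (by omega)]

lemma F_lt' (p q k : ℕ) (hk : 2 ≤ k) (hkp : k ≤ p) (hkq : k ≤ q) (h : p + 2 ≤ q ∨ q + 2 ≤ p) :
    F p q k < F p q 1 := by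
  rcases h with h | h
  · have := F_lt p (q - p - 2) k hk hkp
    rwa [show p + 2 + (q - p - 2) = q by omega] at this
  · have := F_lt q (p - q - 2) k hk hkq
    rw [show q + 2 + (p - q - 2) = p by omega] at this
    rwa [F_symm p q k hkp hkq, F_symm p q 1 (by omega) (by omega)]

lemma N_eq_F {n p k : ℕ} (hp : p ≤ n) {x y : C n} (hd : hammingDist x y = 2 * k) (hk : k ≤ p) :
    N p x y = F p (n - p) k := by
  rw [N, card_common p k x y hd hk, F, show p + (n - p) = n by omega]

lemma N_pos' {n p : ℕ} (hp : p ≤ n) {x y : C n} (h : 0 < N p x y) :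
    ∃ k, hammingDist x y = 2 * k ∧ k ≤ p ∧ k ≤ n - p ∧ N p x y = F p (n - p) k := by
  obtain ⟨k, h1, h2, h3, h4⟩ := N_pos h
  exact ⟨k, h1, h2, h3, N_eq_F hp h1 h2⟩

lemma pres_ne {n : ℕ} (φ : C n ≃ C n) : Pres φ fun x y => x ≠ y := by
  intro x y; simp

lemma pres_two {n p : ℕ} {φ : C n ≃ C n} (hp : 1 ≤ p) (hpn : p < n)
    (hne : p + 2 ≤ n - p ∨ n - p + 2 ≤ p) (h : Pres φ fun x y => hammingDist x y = p) :
    Pres φ fun x y => hammingDist x y = 2 := by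
  have key : ∀ x y : C n, hammingDist x y = 2 ↔ (x ≠ y ∧ N p x y = F p (n - p) 1) := by
    intro x y
    constructor
    · intro hd
      refine ⟨fun e => by simp [e] at hd, N_eq_F (k := 1) hpn.le (by omega) hp⟩
    · rintro ⟨hxy, hN⟩
      have hpos : 0 < N p x y := by rw [hN]; exact F_pos _ _ _ hp (by omega)
      obtain ⟨k, h1, h2, h3, h4⟩ := N_pos' hpn.le hpos
      have hk0 : k ≠ 0 := by
        rintro rfl
        exact hxy (hammingDist_eq_zero.1 (by omega))
      by_contra hd
      have := F_lt' p (n - p) k (by omega) h2 h3 hne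
      omega
  intro x y
  simp only [key, N_pres h, ne_eq, EmbeddingLike.apply_eq_iff_eq]

lemma even_iso {n : ℕ} {φ : C n ≃ C n} (h : Pres φ fun x y => hammingDist x y = 2) :
    ∀ x y, Even (hammingDist x y) → hammingDist (φ x) (φ y) = hammingDist x y := by
  have hU : ∀ r, Pres φ fun x y => Even (hammingDist x y) ∧ hammingDist x y ≤ 2 * r := by
    intro r
    induction r with
    | zero =>
      intro x y
      have a := hammingDist_eq_zero (x := x) (y := y)
      have b := hammingDist_eq_zero (x := φ x) (y := φ y)
      have c : φ x = φ y ↔ x = y := φ.apply_eq_iff_eq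
      simp only [mul_zero, Nat.le_zero, a, b, c]
      constructor
      · rintro ⟨_, rfl⟩; simp
      · rintro ⟨_, rfl⟩; simp
    | succ r ih =>
      have hor : Pres φ fun x y => x = y ∨ hammingDist x y = 2 := by
        intro x y
        have := h x y
        simp only [EmbeddingLike.apply_eq_iff_eq] at *
        rw [this]
      refine pres_congr (pres_comp ih hor) ?_
      intro x y
      constructor
      · rintro ⟨he, hle⟩
        by_cases h0 : 2 ≤ hammingDist x y
        · obtain ⟨z, h1, h2⟩ := exists_down x y h0
          refine ⟨z, ⟨?_, by omega⟩, Or.inr h2⟩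
          rw [Nat.even_iff] at *
          omega
        · exact ⟨y, ⟨he, by rw [Nat.even_iff] at he; omega⟩, Or.inl rfl⟩
      · rintro ⟨z, ⟨he, hle⟩, rfl | h2⟩
        · exact ⟨he, by omega⟩
        · obtain ⟨t, ht, e⟩ := dist_triple x y z
          have := hammingDist_triangle x z y
          rw [Nat.even_iff] at *
          omega
  intro x y he
  have he' := he
  obtain ⟨r, hr⟩ := he
  have h1 := (hU r x y).2 ⟨he', by omega⟩
  by_contra hne
  have h2 := (hU (r - 1) x y).1
  have h3 := h1.1
  have h4 := h1.2
  rw [Nat.even_iff] at h3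
  have := h2 ⟨h1.1, by omega⟩
  have hz := hammingDist_eq_zero (x := x) (y := y)
  omega

/-- The relation of step-distance at most `r` for the relation "distance `0`, `2` or `2p`". -/
def T (p r : ℕ) {n : ℕ} (x y : C n) : Prop :=
  Even (hammingDist x y) ∧ (hammingDist x y ≤ 2 * r ∨ 2 * (p + 1) ≤ hammingDist x y + 2 * r)

lemma T_comp (p r : ℕ) (x y : C (2 * p + 1)) :
    T p (r + 1) x y ↔ ∃ z, T p r x z ∧ T p 1 z y := by
  simp only [T, Nat.even_iff]
  constructor
  · rintro ⟨he, hor⟩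
    by_cases h0 : hammingDist x y ≤ 2 * r ∨ 2 * (p + 1) ≤ hammingDist x y + 2 * r
    · exact ⟨y, ⟨he, h0⟩, by simp⟩
    · rcases hor with h | h
      · by_cases h2 : 2 ≤ hammingDist x y
        · obtain ⟨z, h3, h4⟩ := exists_down x y h2
          exact ⟨z, by omega, by omega⟩
        · omega
      · by_cases h2 : hammingDist x y + 2 ≤ 2 * p + 1
        · obtain ⟨z, h3, h4⟩ := exists_up x y h2
          exact ⟨z, by omega, by omega⟩
        · refine ⟨x, by simp, by omega⟩
  · rintro ⟨z, h1, h2⟩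
    obtain ⟨t, ht, e⟩ := dist_triple x y z
    have a := hammingDist_triangle x z y
    have b := hammingDist_triangle x y z
    have c := hammingDist_triangle z x y
    rw [hammingDist_comm y z] at b
    rw [hammingDist_comm z x] at c
    omega

lemma T_pres (p : ℕ) (hp : 1 ≤ p) {φ : C (2 * p + 1) ≃ C (2 * p + 1)}
    (h : Pres φ fun x y => hammingDist x y = p) (r : ℕ) : Pres φ (T p r) := by
  have hnp : 2 * p + 1 - p = p + 1 := by omega
  have key : ∀ x y : C (2 * p + 1), T p 1 x y ↔ (x = y ∨ N p x y = F p (p + 1) 1) := by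
    intro x y
    have hn : hammingDist x y ≤ 2 * p + 1 := by simpa using hammingDist_le_card_fintype (x := x) (y := y)
    constructor
    · rintro ⟨he, hor⟩
      rw [Nat.even_iff] at he
      by_cases h0 : hammingDist x y = 0
      · exact Or.inl (hammingDist_eq_zero.1 h0)
      right
      have hc : hammingDist x y = 2 * 1 ∨ hammingDist x y = 2 * p := by omega
      rcases hc with hc | hc
      · rw [N_eq_F (by omega) hc hp, hnp]
      · rw [N_eq_F (by omega) hc le_rfl, hnp, F_half_eq p hp]
    · rintro (rfl | hN)
      · simp [T]
      have hpos : 0 < N p x y := by rw [hN]; exact F_pos _ _ _ hp (by omega)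
      obtain ⟨k, h1, h2, h3, h4⟩ := N_pos' (by omega) hpos
      rw [hnp] at h4
      refine ⟨⟨k, by omega⟩, ?_⟩
      by_contra hcon
      have := F_half_lt p k (by omega) (by omega)
      omega
  have h1 : Pres φ (T p 1) := by
    intro x y
    simp only [key, N_pres h, EmbeddingLike.apply_eq_iff_eq]
  induction r with
  | zero =>
    have hz : ∀ x y : C (2 * p + 1), T p 0 x y ↔ x = y := by
      intro x y
      have hn : hammingDist x y ≤ 2 * p + 1 := by
        simpa using hammingDist_le_card_fintype (x := x) (y := y)
      rw [← hammingDist_eq_zero, T, Nat.even_iff]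
      omega
    intro x y
    simp only [hz, EmbeddingLike.apply_eq_iff_eq]
  | succ r ih => exact pres_congr (pres_comp ih h1) (T_comp p r)

lemma even_case (p : ℕ) (hp : 1 ≤ p) (hev : Even p) {φ : C (2 * p + 1) ≃ C (2 * p + 1)}
    (h : Pres φ fun x y => hammingDist x y = p) :
    ∀ x y, Even (hammingDist x y) → hammingDist (φ x) (φ y) = hammingDist x y := by
  rw [Nat.even_iff] at hev
  have key : ∀ x y : C (2 * p + 1), hammingDist x y = p + 2 ↔
      (T p (p + 1) x y ∧ ¬ T p (p / 2 - 1) x y ∧ ¬ hammingDist x y = p) := by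
    intro x y
    simp only [T, Nat.even_iff]
    omega
  have h2 : Pres φ fun x y => hammingDist x y = p + 2 := by
    intro x y
    have := h x y
    simp only at this
    simp only [key, T_pres p hp h _ x y, this]
  exact even_iso (pres_two (by omega) (by omega) (by omega) h2)

lemma odd_case (p : ℕ) (hp : 1 ≤ p) (hodd : Odd p) {φ : C (2 * p + 1) ≃ C (2 * p + 1)}
    (h : Pres φ fun x y => hammingDist x y = p) :
    (Pres φ fun x y => hammingDist x y = p + 1) ∧
    ∀ x y, hammingDist x y = 2 * p + 1 → hammingDist (φ x) (φ y) = 2 * p + 1 := by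
  rw [Nat.odd_iff] at hodd
  have key : ∀ x y : C (2 * p + 1), hammingDist x y = p + 1 ↔
      (T p (p + 1) x y ∧ ¬ T p (p / 2) x y) := by
    intro x y
    simp only [T, Nat.even_iff]
    omega
  have h2 : Pres φ fun x y => hammingDist x y = p + 1 := by
    intro x y
    simp only [key, T_pres p hp h _ x y]
  refine ⟨h2, fun x y hxy => ?_⟩
  set v := flip (φ y) Finset.univ with hv
  have hsame : ∀ w, hammingDist (φ x) w = p → hammingDist v w = p := by
    intro w hw
    obtain ⟨z, rfl⟩ := φ.surjective w
    have hz := (h x z).1 hw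
    simp only at hz
    obtain ⟨t, ht, e⟩ := dist_triple x y z
    have a := hammingDist_triangle x z y
    have hzy := (h2 z y).2 (by simp only; omega)
    simp only at hzy
    have := dist_flip_univ (φ z) (φ y)
    rw [← hv] at this
    rw [hammingDist_comm]
    omega
  have hN : N p (φ x) v = N p (φ x) (φ x) := by
    unfold N
    congr 1
    ext w
    simp only [Finset.mem_filter, Finset.mem_univ, true_and, and_self, and_iff_left_iff_imp]
    exact hsame w
  rw [N_eq_F (k := 0) (x := φ x) (y := φ x) (by omega) (by simp) (by omega)] at hN
  have hpos : 0 < N p (φ x) v := by rw [hN]; exact F_pos _ _ _ (by omega) (by omega)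
  obtain ⟨k, k1, k2, k3, k4⟩ := N_pos' (by omega) hpos
  have hnp : 2 * p + 1 - p = p + 1 := by omega
  rw [hnp] at k4 hN
  have f1 := F_half p k k2
  have f2 := F_half p 0 (by omega)
  have hk : k = 0 := by
    by_contra hk
    have := cb_lt' 0 k (p + 1 - k) (p + 1 - 0) (by omega) (by omega) (by omega)
    omega
  have := dist_flip_univ (φ x) (φ y)
  rw [← hv] at this
  omega

lemma half_case (p : ℕ) (hp : 1 ≤ p) {φ : C (2 * p) ≃ C (2 * p)}
    (h : Pres φ fun x y => hammingDist x y = p) :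
    ∀ x y, hammingDist x y = 2 * p → hammingDist (φ x) (φ y) = 2 * p := by
  intro x y hxy
  have hnp : 2 * p - p = p := by omega
  have hF : ∀ k ≤ p, F p p k = Nat.centralBinom k * Nat.centralBinom (p - k) := by
    intro k hk
    rw [F, Nat.centralBinom, Nat.centralBinom, show p + p - 2 * k = 2 * (p - k) by omega]
  have hN := N_pres h x y
  rw [N_eq_F (k := p) (x := x) (y := y) (by omega) hxy le_rfl, hnp] at hN
  have hpos : 0 < N p (φ x) (φ y) := by rw [hN]; exact F_pos _ _ _ (by omega) (by omega)
  obtain ⟨k, k1, k2, k3, k4⟩ := N_pos' (by omega) hpos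
  rw [hnp] at k4
  have f1 := hF k k2
  have f2 := hF p le_rfl
  rw [Nat.sub_self, mul_comm] at f2
  have hk0 : k ≠ 0 := by
    rintro rfl
    have : φ x = φ y := hammingDist_eq_zero.1 (by omega)
    rw [φ.injective this] at hxy
    simp at hxy
    omega
  by_contra hcon
  have := cb_lt' 0 k (p - k) p (by omega) (by omega) (by omega)
  omega

end WeakIso

open WeakIso

/-- Main Theorem: every weak isometry (`P`-isometry for a nonempty set `P` of distances)
of the Boolean cube `C_n` is an isometry, an even isometry, an `{n}`-isometry, an
`{n/2, n}`-isometry (for `n` even), an `{(n+1)/2}`-isometry (for `n` odd), or an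
`{(n-1)/2, (n+1)/2, n}`-isometry (for `n` odd). -/
theorem weak_isometry_classification (n : ℕ) (hn : 1 ≤ n)
    (P : Set ℕ) (hP : P ⊆ Set.Icc 1 n) (hPne : P.Nonempty)
    (φ : (Fin n → ZMod 2) → Fin n → ZMod 2) (hbij : Function.Bijective φ)
    (hφ : ∀ x y, hammingDist x y ∈ P → hammingDist (φ x) (φ y) = hammingDist x y) :
    (∀ x y, hammingDist (φ x) (φ y) = hammingDist x y) ∨
    (∀ x y, Even (hammingDist x y) → hammingDist (φ x) (φ y) = hammingDist x y) ∨
    (∀ x y, hammingDist x y = n → hammingDist (φ x) (φ y) = n) ∨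
    (Even n ∧ ∀ x y, (hammingDist x y = n / 2 ∨ hammingDist x y = n) →
      hammingDist (φ x) (φ y) = hammingDist x y) ∨
    (Odd n ∧ ∀ x y, hammingDist x y = (n + 1) / 2 →
      hammingDist (φ x) (φ y) = hammingDist x y) ∨
    (Odd n ∧ ∀ x y,
      (hammingDist x y = (n - 1) / 2 ∨ hammingDist x y = (n + 1) / 2 ∨
        hammingDist x y = n) →
      hammingDist (φ x) (φ y) = hammingDist x y) := by
  obtain ⟨p, hpP⟩ := hPne
  obtain ⟨hp1, hpn⟩ := hP hpP
  let e : C n ≃ C n := Equiv.ofBijective φ hbij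
  have h : Pres e fun x y => hammingDist x y = p := by
    refine pres_of_imp e _ fun x y hxy => ?_
    have := hφ x y (by rw [hxy]; exact hpP)
    exact this.trans hxy
  have hp : ∀ x y, hammingDist x y = p → hammingDist (φ x) (φ y) = p := fun x y => (h x y).2
  by_cases c1 : p = n
  · subst c1
    exact Or.inr (Or.inr (Or.inl hp))
  by_cases c2 : n = 2 * p
  · subst c2
    refine Or.inr (Or.inr (Or.inr (Or.inl ⟨by simp, fun x y hxy => ?_⟩)))
    rw [show 2 * p / 2 = p by omega] at hxy
    rcases hxy with hxy | hxy
    · rw [hxy, hp x y hxy]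
    · rw [hxy]; exact half_case p hp1 h x y hxy
  by_cases c3 : n + 1 = 2 * p
  · refine Or.inr (Or.inr (Or.inr (Or.inr (Or.inl ⟨by rw [Nat.odd_iff]; omega, fun x y hxy => ?_⟩))))
    have : hammingDist x y = p := by omega
    rw [this, hp x y this]
  by_cases c4 : n = 2 * p + 1
  · subst c4
    rcases Nat.even_or_odd p with hev | hodd
    · exact Or.inr (Or.inl (even_case p hp1 hev h))
    · obtain ⟨h1, h2⟩ := odd_case p hp1 hodd h
      refine Or.inr (Or.inr (Or.inr (Or.inr (Or.inr ⟨by simp, fun x y hxy => ?_⟩))))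
      rw [show (2 * p + 1 - 1) / 2 = p by omega, show (2 * p + 1 + 1) / 2 = p + 1 by omega] at hxy
      rcases hxy with hxy | hxy | hxy
      · rw [hxy, hp x y hxy]
      · rw [hxy]; exact (h1 x y).2 hxy
      · rw [hxy]; exact h2 x y hxy
  · exact Or.inr (Or.inl (even_iso (pres_two hp1 (by omega) (by omega) h)))
end

section
/- Every 1-isometry of C_n is an isometry. -/
/-- A map sending neighbours to neighbours does not increase the Hamming distance. -/
theorem oneIso_nonexpanding (n : ℕ) (φ : (Fin n → ZMod 2) → Fin n → ZMod 2)
    (hφ : ∀ x y, hammingDist x y = 1 → hammingDist (φ x) (φ y) = 1) (k : ℕ) :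
    ∀ x y, hammingDist x y = k → hammingDist (φ x) (φ y) ≤ k := by
  induction k with
  | zero =>
    intro x y h
    rw [hammingDist_eq_zero] at h
    simp [h]
  | succ k ih =>
    intro x y h
    have hne : x ≠ y := by
      rintro rfl
      simp at h
    obtain ⟨i, hi⟩ := Function.ne_iff.mp hne
    have h1 : hammingDist x (Function.update x i (y i)) = 1 := by
      unfold hammingDist
      rw [Finset.card_eq_one]
      refine ⟨i, ?_⟩
      ext j
      by_cases hj : j = i
      · subst hj; simpa using hi
      · simp [hj]
    have h2 : hammingDist (Function.update x i (y i)) y = k := by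
      unfold hammingDist at h ⊢
      have : (Finset.univ.filter fun j => Function.update x i (y i) j ≠ y j)
          = (Finset.univ.filter fun j => x j ≠ y j).erase i := by
        ext j
        by_cases hj : j = i
        · subst hj; simp
        · simp [hj]
      rw [this, Finset.card_erase_of_mem (by simpa using hi), h]
      rfl
    have h3 := hφ _ _ h1
    have h4 := ih _ _ h2
    have h5 := hammingDist_triangle (φ x) (φ (Function.update x i (y i))) (φ y)
    omega

/-- Every `1`-isometry of the Boolean cube `C_n` is an isometry. -/
theorem oneIsometry_isIsometry (n : ℕ) (hn : 1 ≤ n)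
    (φ : (Fin n → ZMod 2) → Fin n → ZMod 2) (hbij : Function.Bijective φ)
    (hφ : ∀ x y, hammingDist x y = 1 → hammingDist (φ x) (φ y) = 1) :
    ∀ x y, hammingDist (φ x) (φ y) = hammingDist x y := by
  have hle : ∀ x y, hammingDist (φ x) (φ y) ≤ hammingDist x y := fun x y =>
    oneIso_nonexpanding n φ hφ _ x y rfl
  have hit : ∀ (m : ℕ) x y, hammingDist (φ^[m] x) (φ^[m] y) ≤ hammingDist x y := by
    intro m
    induction m with
    | zero => intro x y; simp
    | succ m ih =>
      intro x y
      rw [Function.iterate_succ_apply, Function.iterate_succ_apply]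
      exact (ih _ _).trans (hle x y)
  let e : Equiv.Perm (Fin n → ZMod 2) := Equiv.ofBijective φ hbij
  obtain ⟨m, hm, he⟩ := (isOfFinOrder_of_finite e).exists_pow_eq_one
  have hid : ∀ x, φ^[m] x = x := by
    intro x
    have h := congrArg (fun f : Equiv.Perm (Fin n → ZMod 2) => f x) he
    simp only [Equiv.Perm.coe_one, id, ← Equiv.Perm.iterate_eq_pow] at h
    exact h
  intro x y
  refine le_antisymm (hle x y) ?_
  obtain ⟨k, rfl⟩ : ∃ k, m = k + 1 := ⟨m - 1, by omega⟩
  have h := hit k (φ x) (φ y)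
  rw [← Function.iterate_succ_apply, ← Function.iterate_succ_apply, hid, hid] at h
  exact h
end

section
/- Every 2-isometry of C_n is an even isometry. -/
theorem aux_step {n : ℕ} (k : ℕ) (x y : Fin n → ZMod 2) (h : hammingDist x y = k + 1) :
    ∃ z, hammingDist x z ≤ 1 ∧ hammingDist z y = k := by
  have hne : (Finset.univ.filter (fun i => x i ≠ y i)).Nonempty := by
    rw [← Finset.card_pos]
    unfold hammingDist at h
    omega
  obtain ⟨i, hi⟩ := hne
  refine ⟨Function.update x i (y i), ?_, ?_⟩
  · unfold hammingDist
    have hs : Finset.univ.filter (fun j => x j ≠ Function.update x i (y i) j) ⊆ {i} := by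
      intro j hj
      by_contra hji
      simp at hji
      simp [hji] at hj
    simpa using Finset.card_le_card hs
  · have hs : Finset.univ.filter (fun j => Function.update x i (y i) j ≠ y j)
        = (Finset.univ.filter (fun j => x j ≠ y j)).erase i := by
      ext j
      by_cases hji : j = i
      · subst hji; simp
      · simp [hji]
    unfold hammingDist at h ⊢
    rw [hs, Finset.card_erase_of_mem hi, h]
    rfl

theorem aux_step2 {n : ℕ} (k : ℕ) (x y : Fin n → ZMod 2) (h : hammingDist x y = k + 2) :
    ∃ z, hammingDist x z = 2 ∧ hammingDist z y = k := by
  obtain ⟨z, h1, h2⟩ := aux_step (k + 1) x y h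
  obtain ⟨w, h3, h4⟩ := aux_step k z y h2
  refine ⟨w, ?_, h4⟩
  have t1 := hammingDist_triangle x z w
  have t2 := hammingDist_triangle x w y
  omega

theorem aux_cast {n : ℕ} (x y : Fin n → ZMod 2) :
    (hammingDist x y : ZMod 2) = ∑ i, (x i + y i) := by
  unfold hammingDist
  rw [Finset.card_filter]
  push_cast
  refine Finset.sum_congr rfl fun i _ => ?_
  generalize x i = a
  generalize y i = b
  revert a b
  decide

theorem aux_even {n : ℕ} (x y z : Fin n → ZMod 2) (h1 : Even (hammingDist x y))
    (h2 : Even (hammingDist y z)) : Even (hammingDist x z) := by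
  rw [← ZMod.natCast_eq_zero_iff_even, aux_cast] at *
  have h : ∑ i, (x i + z i) = ∑ i, (x i + y i) + ∑ i, (y i + z i) := by
    rw [← Finset.sum_add_distrib]
    refine Finset.sum_congr rfl fun i _ => ?_
    generalize x i = a
    generalize y i = b
    generalize z i = c
    revert a b c
    decide
  rw [h, h1, h2, add_zero]

theorem aux_le {n : ℕ} (φ : (Fin n → ZMod 2) → Fin n → ZMod 2)
    (hφ : ∀ x y, hammingDist x y = 2 → hammingDist (φ x) (φ y) = 2) (k : ℕ) :
    ∀ x y, hammingDist x y = 2 * k →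
      hammingDist (φ x) (φ y) ≤ 2 * k ∧ Even (hammingDist (φ x) (φ y)) := by
  induction k with
  | zero =>
    intro x y h
    have : x = y := by simpa using h
    subst this
    simp
  | succ k ih =>
    intro x y h
    obtain ⟨z, h1, h2⟩ := aux_step2 (2 * k) x y (by omega)
    obtain ⟨h3, h4⟩ := ih z y h2
    have h5 := hφ x z h1
    have t := hammingDist_triangle (φ x) (φ z) (φ y)
    exact ⟨by omega, aux_even _ (φ z) _ (by rw [h5]; decide) h4⟩

/-- Every `2`-isometry of the Boolean cube `C_n` is an even isometry. -/
theorem twoIsometry_isEvenIsometry (n : ℕ) (hn : 1 ≤ n)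
    (φ : (Fin n → ZMod 2) → Fin n → ZMod 2) (hbij : Function.Bijective φ)
    (hφ : ∀ x y, hammingDist x y = 2 → hammingDist (φ x) (φ y) = 2) :
    ∀ x y, Even (hammingDist x y) → hammingDist (φ x) (φ y) = hammingDist x y := by
  intro x y hxy
  let e : Equiv.Perm (Fin n → ZMod 2) := Equiv.ofBijective φ hbij
  have hpow : ∀ (m : ℕ) (x y : Fin n → ZMod 2), hammingDist x y = 2 →
      hammingDist ((e ^ m) x) ((e ^ m) y) = 2 := by
    intro m
    induction m with
    | zero => intro x y h; simpa using h
    | succ m ih =>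
      intro x y h
      rw [pow_succ']
      exact hφ _ _ (ih x y h)
  obtain ⟨k, hk⟩ := hxy
  obtain ⟨h1, l, hl⟩ := aux_le φ hφ k x y (by omega)
  have hinv : ∀ x, (e ^ (orderOf e - 1)) (φ x) = x := by
    intro x
    change (e ^ (orderOf e - 1) * e) x = x
    rw [← pow_succ, Nat.sub_add_cancel (orderOf_pos e), pow_orderOf_eq_one]
    rfl
  have h2 := (aux_le _ (hpow (orderOf e - 1)) l (φ x) (φ y) (by omega)).1
  rw [hinv, hinv] at h2
  omega
end

section
/- Let 1 ≤ p ≤ n. Every {p, n}-isometry of C_n is a {p, n−p, n}-isometry; that is, if a bijection φ of C_n preserves the distances p and n, then φ also preserves the distance n−p. -/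
theorem hamming_compl_add {n : ℕ} (x y : Fin n → ZMod 2) :
    hammingDist x (y + 1) + hammingDist x y = n := by
  have key : ∀ a b : ZMod 2, a ≠ b + 1 ↔ ¬ a ≠ b := by decide
  have h := Finset.card_filter_add_card_filter_not (s := (Finset.univ : Finset (Fin n)))
    (fun i => x i ≠ y i)
  have e : hammingDist x (y + 1) = (Finset.univ.filter (fun i => ¬ x i ≠ y i)).card := by
    unfold hammingDist
    congr 1
    ext i
    simp only [Finset.mem_filter, Finset.mem_univ, true_and, Pi.add_apply, Pi.one_apply]
    exact key _ _
  rw [e, add_comm]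
  simpa [hammingDist] using h

/-- Every `{p, n}`-isometry of the Boolean cube `C_n` (with `1 ≤ p ≤ n`) is a
`{p, n-p, n}`-isometry: it also preserves the distance `n - p`. -/
theorem pnIsometry_preserves_n_sub_p (n p : ℕ) (hp1 : 1 ≤ p) (hpn : p ≤ n)
    (φ : (Fin n → ZMod 2) → Fin n → ZMod 2) (hbij : Function.Bijective φ)
    (hp : ∀ x y, hammingDist x y = p → hammingDist (φ x) (φ y) = p)
    (hn : ∀ x y, hammingDist x y = n → hammingDist (φ x) (φ y) = n) :
    ∀ x y, hammingDist x y = n - p → hammingDist (φ x) (φ y) = n - p := by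
  intro x y hxy
  have h1 := hamming_compl_add x y
  have h2 := hp x (y + 1) (by omega)
  have h3 := hamming_compl_add y y
  rw [hammingDist_self] at h3
  have h4 := hn (y + 1) y (by rw [hammingDist_comm]; omega)
  have h5 := hamming_compl_add (φ (y + 1)) (φ y)
  have h6 : φ (y + 1) = φ y + 1 := hammingDist_eq_zero.mp (by omega)
  have h7 := hamming_compl_add (φ x) (φ y)
  rw [h6] at h2
  omega
end

section
/- Let 1 ≤ p ≤ n−1. Every {p, n−p}-isometry of C_n is a {p, n−p, n}-isometry; that is, if a bijection φ of C_n preserves the distances p and n−p, then φ also preserves the distance n. -/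
theorem aux_z2 : ∀ a b : ZMod 2, a ≠ b ↔ b = a + 1 := by decide

theorem aux_compl {n : ℕ} (x z : Fin n → ZMod 2) :
    hammingDist x z + hammingDist (fun i => x i + 1) z = n := by
  have h := Finset.card_filter_add_card_filter_not (s := (Finset.univ : Finset (Fin n)))
    (fun i => x i ≠ z i)
  rw [Finset.card_univ, Fintype.card_fin] at h
  have h2 : (Finset.univ.filter fun i => x i + 1 ≠ z i)
      = (Finset.univ.filter fun i => ¬ (x i ≠ z i)) := by
    apply Finset.filter_congr
    intro i _
    rw [aux_z2 (x i) (z i), eq_comm]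
  unfold hammingDist
  rw [h2]
  exact h

theorem aux_anti {n : ℕ} (x y : Fin n → ZMod 2) (h : hammingDist x y = n) :
    y = fun i => x i + 1 := by
  have h1 := aux_compl x y
  have h2 : hammingDist (fun i => x i + 1) y = 0 := by omega
  exact (hammingDist_eq_zero.mp h2).symm

/-- The point obtained from `u` by flipping the coordinates in `S`. -/
def auxFlip {n : ℕ} (u : Fin n → ZMod 2) (S : Finset (Fin n)) : Fin n → ZMod 2 :=
  fun k => if k ∈ S then u k + 1 else u k

theorem auxFlip_dist {n : ℕ} (u : Fin n → ZMod 2) (S : Finset (Fin n)) :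
    hammingDist u (auxFlip u S) = S.card := by
  unfold hammingDist
  congr 1
  ext k
  by_cases hk : k ∈ S <;> simp [auxFlip, hk]

theorem aux_sphere {n p : ℕ} (hp1 : 1 ≤ p) (hpn : p < n) (u v : Fin n → ZMod 2)
    (h : ∀ z, hammingDist u z = p → hammingDist v z = p) :
    u = v ∨ u = fun i => v i + 1 := by
  by_contra hc
  push Not at hc
  obtain ⟨h1, h2⟩ := hc
  obtain ⟨j, hj⟩ := Function.ne_iff.mp h1
  obtain ⟨i, hi⟩ := Function.ne_iff.mp h2
  have hi' : v i = u i := by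
    by_contra hne
    exact hi ((aux_z2 _ _).mp hne)
  have hij : i ≠ j := by
    rintro rfl
    exact hj hi'.symm
  have hj' : v j = u j + 1 := (aux_z2 _ _).mp hj
  have hcard : p - 1 ≤ ((Finset.univ.erase i).erase j : Finset (Fin n)).card := by
    rw [Finset.card_erase_of_mem (by simp [hij.symm]), Finset.card_erase_of_mem (by simp)]
    simp
    omega
  obtain ⟨T, hT, hTc⟩ := Finset.exists_subset_card_eq hcard
  have hiT : i ∉ T := fun hm => by simpa using hT hm
  have hjT : j ∉ T := fun hm => by simpa using hT hm
  have e1 := h (auxFlip u (insert i T)) (by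
    rw [auxFlip_dist, Finset.card_insert_of_notMem hiT]; omega)
  have e2 := h (auxFlip u (insert j T)) (by
    rw [auxFlip_dist, Finset.card_insert_of_notMem hjT]; omega)
  unfold hammingDist at e1 e2
  have key : (Finset.univ.filter fun k => v k ≠ auxFlip u (insert i T) k)
      = insert i (insert j (Finset.univ.filter fun k => v k ≠ auxFlip u (insert j T) k)) := by
    ext k
    by_cases hki : k = i
    · subst hki
      simp [auxFlip, hi']
    · by_cases hkj : k = j
      · subst hkj
        simp [auxFlip, hj', hjT, hki]
      · simp [auxFlip, hki, hkj]
  rw [key, Finset.card_insert_of_notMem, Finset.card_insert_of_notMem] at e1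
  · omega
  · simp [auxFlip, hj']
  · simp [auxFlip, hi', hij, hiT]

theorem aux_card {n : ℕ} (p : ℕ) (y u : Fin n → ZMod 2) :
    (Finset.univ.filter fun z => hammingDist u z = p).card
      ≤ (Finset.univ.filter fun z => hammingDist y z = p).card := by
  apply Finset.card_le_card_of_injOn (fun z => z - u + y)
  · intro z hz
    simp only [Finset.coe_filter, Finset.mem_univ, true_and, Set.mem_setOf_eq] at hz ⊢
    rw [← hz]
    unfold hammingDist
    congr 1
    apply Finset.filter_congr
    intro k _
    simp only [Pi.add_apply, Pi.sub_apply]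
    generalize y k = a
    generalize z k = b
    generalize u k = c
    revert a b c
    decide
  · intro a _ b _ hab
    simpa using hab

/-- Every `{p, n-p}`-isometry of the Boolean cube `C_n` (with `1 ≤ p ≤ n-1`) is a
`{p, n-p, n}`-isometry: it also preserves the distance `n`. -/
theorem pnpIsometry_preserves_n (n p : ℕ) (hp1 : 1 ≤ p) (hpn : p < n)
    (φ : (Fin n → ZMod 2) → Fin n → ZMod 2) (hbij : Function.Bijective φ)
    (hp : ∀ x y, hammingDist x y = p → hammingDist (φ x) (φ y) = p)
    (hq : ∀ x y, hammingDist x y = n - p → hammingDist (φ x) (φ y) = n - p) :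
    ∀ x y, hammingDist x y = n → hammingDist (φ x) (φ y) = n := by
  intro x y hxy
  have hy := aux_anti x y hxy
  have hsurj : ∀ z, hammingDist (φ y) z = p → ∃ z', hammingDist y z' = p ∧ φ z' = z := by
    intro z hz
    have := Finset.surjOn_of_injOn_of_card_le φ
      (s := Finset.univ.filter fun z => hammingDist y z = p)
      (t := Finset.univ.filter fun z => hammingDist (φ y) z = p)
      (by
        intro w hw
        simp only [Finset.coe_filter, Finset.mem_univ, true_and, Set.mem_setOf_eq] at hw ⊢
        exact hp _ _ hw)
      hbij.1.injOn (aux_card p y (φ y))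
    obtain ⟨w, hw, hwz⟩ := this (show z ∈ _ by simpa using hz)
    exact ⟨w, by simpa using hw, hwz⟩
  have hs := aux_sphere hp1 hpn (φ y) (fun i => φ x i + 1) (by
    intro z hz
    obtain ⟨w, hw, rfl⟩ := hsurj z hz
    have h1 := aux_compl x w
    rw [← hy] at h1
    have h2 := hq x w (by omega)
    have h3 := aux_compl (φ x) (φ w)
    omega)
  rcases hs with hs | hs
  · have h3 := aux_compl (φ x) (φ y)
    rw [← hs, hammingDist_self] at h3
    exact h3
  · exfalso
    have : φ y = φ x := by
      rw [hs]
      funext i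
      generalize φ x i = a
      revert a
      decide
    have := hbij.1 this
    rw [this, hammingDist_self] at hxy
    omega
end

section
/- Suppose 4 divides n. Let φ be a bijection of C_n that stabilizes the set {0̄, 1̄}. Then φ is an {n/2, n}-isometry if and only if there exist permutations π_1 and π_2 of {1,...,n}, subsets S_1 and S_2 of E_X, and odd-weight words a and b such that: for every even-weight word c, φ(c) = π_1(c) if {c, c + 1̄} ∩ S_1 = ∅ and φ(c) = π_1(c) + 1̄ otherwise; and for every odd-weight word c, φ(c) = b + π_2(c + a) if {c + a, c + a + 1̄} ∩ S_2 = ∅ and φ(c) = b + π_2(c + a) + 1̄ otherwise. -/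
namespace HI
open Finset

lemma cb_step (j k : ℕ) (h : j < k) :
    Nat.centralBinom (j+1) * Nat.centralBinom k < Nat.centralBinom j * Nat.centralBinom (k+1) := by
  have h1 := Nat.succ_mul_centralBinom_succ j
  have h2 := Nat.succ_mul_centralBinom_succ k
  have p1 := Nat.centralBinom_pos j
  have p2 := Nat.centralBinom_pos k
  have hp : 0 < Nat.centralBinom j * Nat.centralBinom k := Nat.mul_pos p1 p2
  have key : ((j+1)*(k+1)) * (Nat.centralBinom (j+1) * Nat.centralBinom k) <
      ((j+1)*(k+1)) * (Nat.centralBinom j * Nat.centralBinom (k+1)) := by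
    calc ((j+1)*(k+1)) * (Nat.centralBinom (j+1) * Nat.centralBinom k)
        = ((j+1) * Nat.centralBinom (j+1)) * ((k+1) * Nat.centralBinom k) := by ring
      _ = (2 * (2*j+1) * (k+1)) * (Nat.centralBinom j * Nat.centralBinom k) := by rw [h1]; ring
      _ < (2 * (2*k+1) * (j+1)) * (Nat.centralBinom j * Nat.centralBinom k) := by
          apply Nat.mul_lt_mul_of_pos_right _ hp
          nlinarith
      _ = ((j+1) * Nat.centralBinom j) * ((k+1) * Nat.centralBinom (k+1)) := by rw [h2]; ring
      _ = _ := by ring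
  exact lt_of_mul_lt_mul_left key (Nat.zero_le _)

lemma cb_lt (d : ℕ) : ∀ i u : ℕ, i + d + 1 ≤ u →
    Nat.centralBinom (i+d+1) * Nat.centralBinom u < Nat.centralBinom i * Nat.centralBinom (u+d+1) := by
  induction d with
  | zero => intro i u h; exact cb_step i u (by omega)
  | succ d ih =>
    intro i u h
    have h1 := cb_step (i+d+1) u (by omega)
    have h2 := ih i (u+1) (by omega)
    rw [show u + (d+1) + 1 = u+1+d+1 by ring]
    exact lt_trans h1 h2

lemma cb_inj (M i j : ℕ) (hi : i ≤ M) (hj : j ≤ M)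
    (h : Nat.centralBinom i * Nat.centralBinom (M - i) =
      Nat.centralBinom j * Nat.centralBinom (M - j)) : i = j ∨ i + j = M := by
  have main : ∀ i j, i < j → i + j < M → j ≤ M - j →
      Nat.centralBinom j * Nat.centralBinom (M - j) <
      Nat.centralBinom i * Nat.centralBinom (M - i) := by
    intro i j h1 h2 h3
    have := cb_lt (j - i - 1) i (M - j) (by omega)
    rwa [show i + (j-i-1) + 1 = j by omega, show M - j + (j-i-1) + 1 = M - i by omega] at this
  have main2 : ∀ i j, i < j → i + j < M →
      Nat.centralBinom j * Nat.centralBinom (M - j) <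
      Nat.centralBinom i * Nat.centralBinom (M - i) := by
    intro i j h1 h2
    by_cases h3 : j ≤ M - j
    · exact main i j h1 h2 h3
    · have := main i (M - j) (by omega) (by omega) (by omega)
      rw [show M - (M - j) = j by omega] at this
      rwa [mul_comm]
  have main3 : ∀ i j, i < j → i + j ≠ M → i ≤ M → j ≤ M →
      Nat.centralBinom j * Nat.centralBinom (M - j) ≠
      Nat.centralBinom i * Nat.centralBinom (M - i) := by
    intro i j h1 h2 h3 h4
    by_cases h : i + j < M
    · exact (main2 i j h1 h).ne
    · have := main2 (M - j) (M - i) (by omega) (by omega)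
      rw [show M - (M - j) = j by omega, show M - (M - i) = i by omega] at this
      intro he
      rw [mul_comm, mul_comm (Nat.centralBinom (M - j))] at this
      omega
  by_contra hc
  push Not at hc
  rcases lt_or_gt_of_ne hc.1 with hl | hl
  · exact main3 i j hl hc.2 hi hj h.symm
  · exact main3 j i hl (by omega) hj hi h

variable {n : ℕ}

/-- support -/
def supp (x : Fin n → ZMod 2) : Finset (Fin n) := univ.filter (fun k => x k ≠ 0)

lemma wt_supp (x : Fin n → ZMod 2) : hammingNorm x = #(supp x) := rfl

lemma z2 (a : ZMod 2) : a = 0 ∨ a = 1 := by revert a; decide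

lemma dist_eq (x y : Fin n → ZMod 2) : hammingDist x y = hammingNorm (x + y) := by
  rw [hammingDist_eq_hammingNorm]
  congr 1
  funext k
  simp only [Pi.add_apply, Pi.neg_apply]
  generalize x k = a
  generalize y k = b
  revert a b; decide

lemma supp_add (x y : Fin n → ZMod 2) : supp (x + y) = symmDiff (supp x) (supp y) := by
  ext k
  simp only [supp, mem_filter, mem_univ, true_and, Pi.add_apply, mem_symmDiff]
  generalize x k = a
  generalize y k = b
  revert a b; decide

lemma symm_card (A B : Finset (Fin n)) : #(symmDiff A B) + 2 * #(A ∩ B) = #A + #B := by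
  have h1 := card_sdiff_add_card_inter A B
  have h2 := card_sdiff_add_card_inter B A
  have h3 : #(symmDiff A B) = #(A \ B) + #(B \ A) := by
    rw [symmDiff_def, sup_eq_union, card_union_of_disjoint disjoint_sdiff_sdiff]
  rw [inter_comm] at h2
  omega

lemma wt_add (x y : Fin n → ZMod 2) :
    hammingNorm (x + y) + 2 * #(supp x ∩ supp y) = hammingNorm x + hammingNorm y := by
  simp only [wt_supp, supp_add, symm_card]

def suppEquiv : (Fin n → ZMod 2) ≃ Finset (Fin n) where
  toFun := supp
  invFun s := fun k => if k ∈ s then 1 else 0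
  left_inv x := by
    funext k
    rcases z2 (x k) with h | h <;> simp [supp, h]
  right_inv s := by ext k; simp [supp]

lemma supp_inj {x y : Fin n → ZMod 2} (h : supp x = supp y) : x = y := suppEquiv.injective h

lemma count_fin (U : Finset (Fin n)) (p q : ℕ) :
    #(univ.filter (fun Z : Finset (Fin n) => #(Z ∩ U) = p ∧ #(Z \ U) = q)) =
      (#U).choose p * (n - #U).choose q := by
  have : (n - #U) = #Uᶜ := by rw [card_compl]; simp
  rw [this, ← card_powersetCard, ← card_powersetCard, ← card_product]
  apply card_nbij' (fun Z => (Z ∩ U, Z \ U)) (fun P => P.1 ∪ P.2)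
  · intro Z hZ
    simp only [coe_filter, mem_univ, true_and, Set.mem_ofPred_eq] at hZ
    simp only [coe_product, Set.mem_prod, mem_coe, mem_powersetCard]
    refine ⟨⟨inter_subset_right, hZ.1⟩, ?_, hZ.2⟩
    intro k hk
    simp at hk ⊢
    exact hk.2
  · rintro ⟨P, Q⟩ h
    simp only [coe_product, Set.mem_prod, mem_coe, mem_powersetCard] at h
    simp only [coe_filter, mem_univ, true_and, Set.mem_ofPred_eq]
    obtain ⟨⟨h1, h2⟩, h3, h4⟩ := h
    have e1 : (P ∪ Q) ∩ U = P := by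
      ext k
      have a := @h1 k
      have b := @h3 k
      simp at a b ⊢
      tauto
    have e2 : (P ∪ Q) \ U = Q := by
      ext k
      have a := @h1 k
      have b := @h3 k
      simp at a b ⊢
      tauto
    rw [e1, e2]; exact ⟨h2, h4⟩
  · intro Z _
    ext k
    simp
    tauto
  · rintro ⟨P, Q⟩ h
    simp only [coe_product, Set.mem_prod, mem_coe, mem_powersetCard] at h
    obtain ⟨⟨h1, h2⟩, h3, h4⟩ := h
    simp only [Prod.mk.injEq]
    constructor
    · ext k
      have a := @h1 k
      have b := @h3 k
      simp at a b ⊢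
      tauto
    · ext k
      have a := @h1 k
      have b := @h3 k
      simp at a b ⊢
      tauto

/-- number of common neighbours -/
def cnt (x y : Fin n → ZMod 2) : ℕ :=
  #(univ.filter (fun z => hammingDist x z = n / 2 ∧ hammingDist y z = n / 2))

lemma cnt_fin (x y : Fin n → ZMod 2) : cnt x y =
    #(univ.filter (fun Z : Finset (Fin n) => #Z = n / 2 ∧ #(symmDiff (supp (x + y)) Z) = n / 2)) := by
  unfold cnt
  apply card_equiv ((Equiv.addLeft x).trans suppEquiv)
  intro z
  have e : suppEquiv (x + z) = supp (x + z) := rfl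
  have e2 : (x + y) + (x + z) = y + z := by
    funext k
    simp only [Pi.add_apply]
    generalize x k = a
    generalize y k = b
    generalize z k = c
    revert a b c; decide
  simp [dist_eq, e, ← supp_add, e2, ← wt_supp]

lemma cnt_even (m j : ℕ) (hn : n = 4 * m) (x y : Fin n → ZMod 2) (h : hammingDist x y = 2 * j) :
    j ≤ 2 * m ∧ cnt x y = Nat.centralBinom j * Nat.centralBinom (2 * m - j) := by
  rw [dist_eq, wt_supp] at h
  have hU : #(supp (x+y)) ≤ n := by simpa using card_le_univ (supp (x+y))
  refine ⟨by omega, ?_⟩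
  rw [cnt_fin]
  have := count_fin (supp (x+y)) j (2 * m - j)
  rw [h, show n - 2 * j = 2 * (2 * m - j) by omega] at this
  rw [Nat.centralBinom_eq_two_mul_choose, Nat.centralBinom_eq_two_mul_choose, ← this]
  congr 1
  ext Z
  simp only [mem_filter, mem_univ, true_and]
  have h1 := card_sdiff_add_card_inter Z (supp (x+y))
  have h2 := symm_card (supp (x+y)) Z
  rw [inter_comm] at h2
  omega

lemma cnt_odd (x y : Fin n → ZMod 2) (h : ¬ Even (hammingDist x y)) : cnt x y = 0 := by
  rw [dist_eq, wt_supp] at h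
  rw [cnt_fin, card_eq_zero, filter_eq_empty_iff]
  rintro Z -
  have h2 := symm_card (supp (x+y)) Z
  rintro ⟨h3, h4⟩
  apply h
  rw [Nat.even_iff]
  omega

/-- the hypothesis on the map -/
def Iso (φ : (Fin n → ZMod 2) → Fin n → ZMod 2) : Prop :=
  ∀ x y, (hammingDist x y = n / 2 ∨ hammingDist x y = n) →
      hammingDist (φ x) (φ y) = hammingDist x y

lemma iso_iff (φ : (Fin n → ZMod 2) → Fin n → ZMod 2) (hb : Function.Bijective φ)
    (hi : Iso φ) (x y) : hammingDist (φ x) (φ y) = n / 2 ↔ hammingDist x y = n / 2 := by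
  refine ⟨?_, fun h => (hi x y (Or.inl h)).trans h⟩
  classical
  let T : Finset ((Fin n → ZMod 2) × (Fin n → ZMod 2)) :=
    univ.filter (fun p => hammingDist p.1 p.2 = n / 2)
  have hinj : Function.Injective (Prod.map φ φ) := hb.1.prodMap hb.1
  have hsub : T.image (Prod.map φ φ) ⊆ T := by
    intro p hp
    simp only [mem_image, T, mem_filter, mem_univ, true_and] at hp ⊢
    obtain ⟨q, hq, rfl⟩ := hp
    exact (hi q.1 q.2 (Or.inl hq)).trans hq
  have heq : T.image (Prod.map φ φ) = T :=
    eq_of_subset_of_card_le hsub (by rw [card_image_of_injective _ hinj])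
  intro h
  have hm : Prod.map φ φ (x, y) ∈ T.image (Prod.map φ φ) := by
    rw [heq]; simpa [T] using h
  rw [mem_image] at hm
  obtain ⟨q, hq, hqe⟩ := hm
  have := hinj hqe
  subst this
  simpa [T] using hq

lemma cnt_iso (φ : (Fin n → ZMod 2) → Fin n → ZMod 2) (hb : Function.Bijective φ)
    (hi : Iso φ) (x y) : cnt (φ x) (φ y) = cnt x y := by
  symm
  apply card_equiv (Equiv.ofBijective φ hb)
  intro z
  simp [iso_iff φ hb hi]

lemma dist_iso (m : ℕ) (hn : n = 4 * m) (φ : (Fin n → ZMod 2) → Fin n → ZMod 2)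
    (hb : Function.Bijective φ) (hi : Iso φ) (x y) (h : Even (hammingDist x y)) :
    hammingDist (φ x) (φ y) = hammingDist x y ∨
      hammingDist (φ x) (φ y) + hammingDist x y = n := by
  obtain ⟨j, hj⟩ := h
  rw [← two_mul] at hj
  obtain ⟨h1, h2⟩ := cnt_even m j hn x y hj
  have h3 := cnt_iso φ hb hi x y
  have he : Even (hammingDist (φ x) (φ y)) := by
    by_contra hc
    rw [cnt_odd _ _ hc, h2] at h3
    have := Nat.mul_pos (Nat.centralBinom_pos j) (Nat.centralBinom_pos (2*m-j))
    omega
  obtain ⟨i, hi'⟩ := he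
  rw [← two_mul] at hi'
  obtain ⟨h4, h5⟩ := cnt_even m i hn _ _ hi'
  rw [h2, h5] at h3
  have := cb_inj (2*m) i j h4 h1 h3
  omega

lemma dist_iso_odd (m : ℕ) (hn : n = 4 * m) (φ : (Fin n → ZMod 2) → Fin n → ZMod 2)
    (hb : Function.Bijective φ) (hi : Iso φ) (x y) (h : ¬ Even (hammingDist x y)) :
    ¬ Even (hammingDist (φ x) (φ y)) := by
  rintro ⟨j, hj⟩
  rw [← two_mul] at hj
  obtain ⟨h1, h2⟩ := cnt_even m j hn _ _ hj
  have h3 := cnt_iso φ hb hi x y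
  rw [cnt_odd _ _ h, h2] at h3
  have := Nat.mul_pos (Nat.centralBinom_pos j) (Nat.centralBinom_pos (2*m-j))
  omega

lemma common_pt (F : Fin n → Finset (Fin n)) (J : Finset (Fin n)) (hJ : 4 ≤ #J)
    (h2 : ∀ j ∈ J, #(F j) = 2)
    (h1 : ∀ j ∈ J, ∀ k ∈ J, j ≠ k → #(F j ∩ F k) = 1) : ∃ a, ∀ j ∈ J, a ∈ F j := by
  obtain ⟨j1, hj1⟩ : J.Nonempty := card_pos.mp (by omega)
  obtain ⟨j2, hj2⟩ : (J.erase j1).Nonempty := card_pos.mp (by rw [card_erase_of_mem hj1]; omega)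
  rw [mem_erase] at hj2
  obtain ⟨a, ha⟩ := card_eq_one.mp (h1 j1 hj1 j2 hj2.2 hj2.1.symm)
  refine ⟨a, ?_⟩
  have ha1 : a ∈ F j1 ∩ F j2 := by rw [ha]; simp
  rw [mem_inter] at ha1
  obtain ⟨b, hb⟩ := card_eq_one.mp (show #((F j1).erase a) = 1 by
    rw [card_erase_of_mem ha1.1, h2 j1 hj1])
  obtain ⟨c, hc⟩ := card_eq_one.mp (show #((F j2).erase a) = 1 by
    rw [card_erase_of_mem ha1.2, h2 j2 hj2.2])
  have F1 : F j1 = {a, b} := by rw [← insert_erase ha1.1, hb]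
  have F2 : F j2 = {a, c} := by rw [← insert_erase ha1.2, hc]
  have hab : b ≠ a := by
    have : b ∈ (F j1).erase a := by rw [hb]; simp
    exact (mem_erase.mp this).1
  have hac : c ≠ a := by
    have : c ∈ (F j2).erase a := by rw [hc]; simp
    exact (mem_erase.mp this).1
  have hbc : b ≠ c := by
    rintro rfl
    have := h1 j1 hj1 j2 hj2.2 hj2.1.symm
    rw [F1, F2, inter_self, card_pair hab.symm] at this
    omega
  -- any member misses a only if it is {b,c}
  have step : ∀ j ∈ J, a ∉ F j → F j = {b, c} := by
    intro j hj hna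
    have n1 : j1 ≠ j := by rintro rfl; exact hna ha1.1
    have n2 : j2 ≠ j := by rintro rfl; exact hna ha1.2
    have i1 := h1 j1 hj1 j hj n1
    have i2 := h1 j2 hj2.2 j hj n2
    obtain ⟨u, hu⟩ := card_pos.mp (show 0 < #(F j1 ∩ F j) by omega)
    obtain ⟨v, hv⟩ := card_pos.mp (show 0 < #(F j2 ∩ F j) by omega)
    rw [F1, mem_inter, mem_insert, mem_singleton] at hu
    rw [F2, mem_inter, mem_insert, mem_singleton] at hv
    have hbj : b ∈ F j := by
      rcases hu.1 with rfl | rfl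
      · exact absurd hu.2 hna
      · exact hu.2
    have hcj : c ∈ F j := by
      rcases hv.1 with rfl | rfl
      · exact absurd hv.2 hna
      · exact hv.2
    symm
    apply eq_of_subset_of_card_le
    · intro t ht
      simp at ht
      rcases ht with rfl | rfl <;> assumption
    · rw [h2 j hj, card_pair hbc]
  intro j hj
  by_contra hna
  have hF := step j hj hna
  have n1 : j1 ≠ j := by rintro rfl; exact hna ha1.1
  have n2 : j2 ≠ j := by rintro rfl; exact hna ha1.2
  obtain ⟨k, hk⟩ : (((J.erase j1).erase j2).erase j).Nonempty := card_pos.mp (by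
    have e1 := pred_card_le_card_erase (s := J) (a := j1)
    have e2 := pred_card_le_card_erase (s := J.erase j1) (a := j2)
    have e3 := pred_card_le_card_erase (s := (J.erase j1).erase j2) (a := j)
    omega)
  simp only [mem_erase] at hk
  obtain ⟨k3, k2, k1, hk⟩ := hk
  have i1 := h1 k hk j1 hj1 k1
  have i2 := h1 k hk j2 hj2.2 k2
  have i3 := h1 k hk j hj k3
  by_cases hak : a ∈ F k
  · obtain ⟨v, hv⟩ := card_pos.mp (show 0 < #(F k ∩ F j) by omega)
    rw [hF, mem_inter, mem_insert, mem_singleton] at hv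
    rcases hv with ⟨hv, rfl | rfl⟩
    · have : ({a, v} : Finset (Fin n)) ⊆ F k ∩ F j1 := by
        rw [F1]; intro t ht; simp at ht ⊢
        rcases ht with rfl | rfl <;> simp [*]
      have := card_le_card this
      rw [card_pair hab.symm] at this
      omega
    · have : ({a, v} : Finset (Fin n)) ⊆ F k ∩ F j2 := by
        rw [F2]; intro t ht; simp at ht ⊢
        rcases ht with rfl | rfl <;> simp [*]
      have := card_le_card this
      rw [card_pair hac.symm] at this
      omega
  · rw [step k hk hak, hF, inter_self, card_pair hbc] at i3
    omega

lemma whitney (hn : 5 ≤ n) (f : Fin n → Fin n → Finset (Fin n))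
    (hs : ∀ i j, f i j = f j i)
    (h2 : ∀ i j, i ≠ j → #(f i j) = 2)
    (h1 : ∀ i j k, i ≠ j → i ≠ k → j ≠ k → #(f i j ∩ f i k) = 1)
    (h0 : ∀ i j k l, i ≠ j → k ≠ l → i ≠ k → i ≠ l → j ≠ k → j ≠ l → #(f i j ∩ f k l) = 0) :
    ∃ σ : Equiv.Perm (Fin n), ∀ i j, i ≠ j → f i j = {σ i, σ j} := by
  have hex : ∀ i, ∃ a, ∀ j ∈ univ.erase i, a ∈ f i j := by
    intro i
    apply common_pt
    · rw [card_erase_of_mem (mem_univ _)]; simp; omega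
    · intro j hj; exact h2 i j (by simpa using (ne_of_mem_erase hj).symm)
    · intro j hj k hk hjk
      exact h1 i j k (ne_of_mem_erase hj).symm (ne_of_mem_erase hk).symm hjk
  choose s hs' using hex
  have hsm : ∀ i j, i ≠ j → s i ∈ f i j := fun i j h => hs' i j (by simp [h.symm])
  have hinj : Function.Injective s := by
    intro i j hij
    by_contra hne
    obtain ⟨k, hk⟩ : (((univ : Finset (Fin n)).erase i).erase j).Nonempty := card_pos.mp (by
      have e1 := pred_card_le_card_erase (s := (univ : Finset (Fin n))) (a := i)
      have e2 := pred_card_le_card_erase (s := univ.erase i) (a := j)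
      simp only [card_univ, Fintype.card_fin] at *
      omega)
    obtain ⟨l, hl⟩ : ((((univ : Finset (Fin n)).erase i).erase j).erase k).Nonempty :=
      card_pos.mp (by
      have e1 := pred_card_le_card_erase (s := (univ : Finset (Fin n))) (a := i)
      have e2 := pred_card_le_card_erase (s := univ.erase i) (a := j)
      have e3 := pred_card_le_card_erase (s := (univ.erase i).erase j) (a := k)
      simp only [card_univ, Fintype.card_fin] at *
      omega)
    simp only [mem_erase, mem_univ, and_true] at hk hl
    have := h0 i k j l hk.2.symm hl.2.1.symm hne hl.2.2.symm hk.1 hl.1.symm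
    rw [card_eq_zero] at this
    have hm : s i ∈ f i k ∩ f j l := by
      rw [mem_inter]
      exact ⟨hsm i k hk.2.symm, by rw [hij]; exact hsm j l hl.2.1.symm⟩
    rw [this] at hm
    simp at hm
  refine ⟨Equiv.ofBijective s (Finite.injective_iff_bijective.mp hinj), ?_⟩
  intro i j hij
  symm
  apply eq_of_subset_of_card_le
  · intro t ht
    simp at ht
    rcases ht with rfl | rfl
    · exact hsm i j hij
    · rw [hs]; exact hsm j i hij.symm
  · rw [h2 i j hij, card_pair]
    exact fun h => hij (hinj h)


/-- equal up to complement -/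
def R (x y : Fin n → ZMod 2) : Prop := x = y ∨ x = y + 1

lemma add_self (x : Fin n → ZMod 2) : x + x = 0 := by
  funext k
  simp only [Pi.add_apply, Pi.zero_apply]
  generalize x k = a
  revert a; decide

lemma add_add_self (x y : Fin n → ZMod 2) : x + y + y = x := by
  rw [add_assoc, add_self, add_zero]

lemma R.symm {x y : Fin n → ZMod 2} (h : R x y) : R y x := by
  rcases h with rfl | rfl
  · exact Or.inl rfl
  · exact Or.inr (add_add_self _ _).symm

lemma R.trans {x y z : Fin n → ZMod 2} (h : R x y) (h' : R y z) : R x z := by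
  rcases h with rfl | rfl
  · exact h'
  · rcases h' with rfl | rfl
    · exact Or.inr rfl
    · exact Or.inl (add_add_self _ _)

lemma R.add {x y x' y' : Fin n → ZMod 2} (h : R x x') (h' : R y y') : R (x + y) (x' + y') := by
  rcases h with rfl | rfl <;> rcases h' with rfl | rfl
  · exact Or.inl rfl
  · exact Or.inr (by ring)
  · exact Or.inr (by ring)
  · refine Or.inl ?_
    calc x' + 1 + (y' + 1) = (x' + y') + 1 + 1 := by ring
      _ = _ := add_add_self _ _

lemma wt_one (x : Fin n → ZMod 2) : hammingNorm (x + 1) + hammingNorm x = n := by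
  have h := wt_add x 1
  have h1 : supp (1 : Fin n → ZMod 2) = univ := by ext k; simp [supp]
  have h2 : hammingNorm (1 : Fin n → ZMod 2) = n := by rw [wt_supp, h1]; simp
  rw [h1, inter_univ, h2, ← wt_supp] at h
  omega

lemma R.wt {x y : Fin n → ZMod 2} (h : R x y) :
    hammingNorm x = hammingNorm y ∨ hammingNorm x + hammingNorm y = n := by
  rcases h with rfl | rfl
  · exact Or.inl rfl
  · exact Or.inr (wt_one y)

/-- weight two word -/
def e (i j : Fin n) : Fin n → ZMod 2 := Pi.single i 1 + Pi.single j 1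

lemma e_comm (i j : Fin n) : e i j = e j i := add_comm _ _

lemma supp_e (i j : Fin n) (h : i ≠ j) : supp (e i j) = {i, j} := by
  ext k
  simp only [supp, e, mem_filter, mem_univ, true_and, Pi.add_apply, Pi.single_apply, mem_insert,
    mem_singleton]
  by_cases h1 : k = i
  · subst h1; simp [h]
  · by_cases h2 : k = j
    · subst h2; simp [h1]
    · simp [h1, h2]

lemma wt_e (i j : Fin n) (h : i ≠ j) : hammingNorm (e i j) = 2 := by
  rw [wt_supp, supp_e i j h, card_pair h]

lemma wt_add_e (c : Fin n → ZMod 2) (i j : Fin n) (h : i ≠ j) :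
    hammingNorm (c + e i j) + 2 * ((if c i = 0 then 0 else 1) + (if c j = 0 then 0 else 1)) =
      hammingNorm c + 2 := by
  have := wt_add c (e i j)
  rw [wt_e i j h, supp_e i j h] at this
  rw [← this]
  congr 2
  have hc : supp c ∩ {i, j} = ({i, j} : Finset (Fin n)).filter (fun k => c k ≠ 0) := by
    ext k; simp [supp, and_comm]
  rw [hc, card_filter, sum_pair h]
  simp

lemma wt_even_add {x y : Fin n → ZMod 2} (hx : Even (hammingNorm x)) (hy : Even (hammingNorm y)) :
    Even (hammingNorm (x + y)) := by
  have := wt_add x y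
  rw [Nat.even_iff] at *
  omega

lemma keyd (m : ℕ) (hn : n = 4 * m) (φ : (Fin n → ZMod 2) → Fin n → ZMod 2)
    (hb : Function.Bijective φ) (hi : Iso φ) {x y x' y' : Fin n → ZMod 2}
    (hx : Even (hammingNorm x)) (hy : Even (hammingNorm y)) (hx' : R (φ x) x') (hy' : R (φ y) y') :
    hammingNorm (x' + y') = hammingNorm (x + y) ∨
      hammingNorm (x' + y') + hammingNorm (x + y) = n := by
  have h1 := dist_iso m hn φ hb hi x y (by rw [dist_eq]; exact wt_even_add hx hy)
  have h2 := (hx'.add hy').wt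
  rw [dist_eq, dist_eq] at h1
  omega

lemma keyw (m : ℕ) (hn : n = 4 * m) (φ : (Fin n → ZMod 2) → Fin n → ZMod 2)
    (hb : Function.Bijective φ) (hi : Iso φ) (h0 : R (φ 0) 0) {x x' : Fin n → ZMod 2}
    (hx : Even (hammingNorm x)) (hx' : R (φ x) x') :
    hammingNorm x' = hammingNorm x ∨ hammingNorm x' + hammingNorm x = n := by
  have := keyd m hn φ hb hi hx (by simp : Even (hammingNorm (0 : Fin n → ZMod 2))) hx' h0
  simpa using this

/-- choice of representative of the image having the same weight -/
noncomputable def g (φ : (Fin n → ZMod 2) → Fin n → ZMod 2) (x : Fin n → ZMod 2) : Fin n → ZMod 2 :=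
  if hammingNorm (φ x) = hammingNorm x then φ x else φ x + 1

lemma g_R (φ : (Fin n → ZMod 2) → Fin n → ZMod 2) (x) : R (φ x) (g φ x) := by
  unfold g
  split_ifs
  · exact Or.inl rfl
  · exact Or.inr (add_add_self _ _).symm

lemma g_wt (m : ℕ) (hn : n = 4 * m) (φ : (Fin n → ZMod 2) → Fin n → ZMod 2)
    (hb : Function.Bijective φ) (hi : Iso φ) (h0 : R (φ 0) 0) {x : Fin n → ZMod 2}
    (hx : Even (hammingNorm x)) : hammingNorm (g φ x) = hammingNorm x := by
  have := keyw m hn φ hb hi h0 hx (Or.inl rfl : R (φ x) (φ x))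
  have h1 := wt_one (φ x)
  unfold g
  split_ifs <;> omega

lemma sigma_big (m : ℕ) (hn : n = 4 * m) (hm : 2 ≤ m) (φ : (Fin n → ZMod 2) → Fin n → ZMod 2)
    (hb : Function.Bijective φ) (hi : Iso φ) (h0 : R (φ 0) 0) :
    ∃ σ : Equiv.Perm (Fin n), ∀ i j, i ≠ j → R (φ (e i j)) (e (σ i) (σ j)) := by
  have ev : ∀ i j : Fin n, i ≠ j → Even (hammingNorm (e i j)) := by
    intro i j h; rw [wt_e i j h]; exact even_two
  have g2 : ∀ i j, i ≠ j → hammingNorm (g φ (e i j)) = 2 := by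
    intro i j h
    rw [g_wt m hn φ hb hi h0 (ev i j h), wt_e i j h]
  have gg : ∀ i j k l, i ≠ j → k ≠ l → 
      #(supp (g φ (e i j)) ∩ supp (g φ (e k l))) = #(({i, j} : Finset (Fin n)) ∩ {k, l}) ∨ 
      i = k ∧ j = l ∨ i = l ∧ j = k := by
    intro i j k l h h'
    have a := keyd m hn φ hb hi (ev i j h) (ev k l h') (g_R φ _) (g_R φ _)
    have b := wt_add (g φ (e i j)) (g φ (e k l))
    have c := wt_add (e i j) (e k l)
    rw [g2 i j h, g2 k l h'] at b
    rw [wt_e i j h, wt_e k l h', supp_e i j h, supp_e k l h'] at c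
    have d : i = k ∧ j = l ∨ i = l ∧ j = k ∨ #(({i, j} : Finset (Fin n)) ∩ {k, l}) ≤ 1 := by
      by_contra hc
      push Not at hc
      obtain ⟨c1, c2, c3⟩ := hc
      have e1 : ({i, j} : Finset (Fin n)) ∩ {k, l} = {i, j} := by
        apply eq_of_subset_of_card_le inter_subset_left
        rw [card_pair h]; omega
      have hi : i ∈ ({i, j} : Finset (Fin n)) ∩ {k, l} := by rw [e1]; simp
      have hj : j ∈ ({i, j} : Finset (Fin n)) ∩ {k, l} := by rw [e1]; simp
      simp at hi hj
      grind
    rcases d with d | d | d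
    · exact Or.inr (Or.inl d)
    · exact Or.inr (Or.inr d)
    · left; omega
  obtain ⟨σ, hσ⟩ := whitney (by omega : 5 ≤ n) (fun i j => supp (g φ (e i j)))
    (fun i j => by simp only [e_comm i j]) (fun i j h => g2 i j h)
    (by
      intro i j k h1 h2 h3
      rcases gg i j i k h1 h2 with h | h | h
      · rw [h]
        have : ({i, j} : Finset (Fin n)) ∩ {i, k} = {i} := by
          ext t; simp; grind
        rw [this]; simp
      · exact absurd h.2 h3
      · exact absurd h.1 h2)
    (by
      intro i j k l h1 h2 h3 h4 h5 h6
      rcases gg i j k l h1 h2 with h | h | h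
      · rw [h, card_eq_zero]
        ext t; simp; grind
      · exact absurd h.1 h3
      · exact absurd h.1 h4)
  refine ⟨σ, fun i j h => ?_⟩
  have : g φ (e i j) = e (σ i) (σ j) := by
    apply supp_inj
    rw [supp_e _ _ (fun h' => h (σ.injective h'))]
    exact hσ i j h
  rw [← this]
  exact g_R φ _

lemma four_rep : ∀ u : Fin 4 → ZMod 2, hammingNorm u = 2 →
    ∃ j : Fin 4, j ≠ 0 ∧ (u = e 0 j ∨ u = e 0 j + 1) := by
  unfold e; decide

set_option synthInstance.maxSize 2000 in
set_option synthInstance.maxHeartbeats 400000 in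
lemma four_perm : ∀ a b c : Fin 4, a ≠ 0 → b ≠ 0 → c ≠ 0 → a ≠ b → a ≠ c → b ≠ c →
    ∃ σ : Equiv.Perm (Fin 4), σ 0 = 0 ∧ σ 1 = a ∧ σ 2 = b ∧ σ 3 = c := by
  decide

set_option synthInstance.maxSize 2000 in
set_option synthInstance.maxHeartbeats 400000 in
lemma four_e : ∀ i j k l : Fin 4, i ≠ j → k ≠ l → i ≠ k → i ≠ l → j ≠ k → j ≠ l →
    e i j = e k l + 1 := by
  unfold e; decide

lemma R_image (m : ℕ) (hn : n = 4 * m) (φ : (Fin n → ZMod 2) → Fin n → ZMod 2)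
    (hi : Iso φ) (x) : φ (x + 1) = φ x + 1 := by
  have h1 : hammingDist (x + 1) x = n := by
    rw [dist_eq, show x + 1 + x = 0 + 1 by rw [← add_self x]; ring]
    simpa using wt_one (0 : Fin n → ZMod 2)
  have h2 := hi _ _ (Or.inr h1)
  rw [h1, dist_eq] at h2
  have h3 := wt_one (φ (x + 1) + φ x)
  have h4 : hammingNorm (φ (x + 1) + φ x + 1) = 0 := by omega
  rw [hammingNorm_eq_zero] at h4
  calc φ (x+1) = (φ (x + 1) + φ x + 1) + 1 + φ x := by
        rw [add_add_self, add_add_self]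
    _ = _ := by rw [h4]; ring

lemma sigma_four (φ : (Fin 4 → ZMod 2) → Fin 4 → ZMod 2)
    (hb : Function.Bijective φ) (hi : Iso φ) (h0 : R (φ 0) 0) :
    ∃ σ : Equiv.Perm (Fin 4), ∀ i j, i ≠ j → R (φ (e i j)) (e (σ i) (σ j)) := by
  have hr : ∀ j : Fin 4, j ≠ 0 → ∃ k : Fin 4, k ≠ 0 ∧ R (φ (e 0 j)) (e 0 k) := by
    intro j hj
    apply four_rep
    have := keyw 1 rfl φ hb hi h0 (x := e 0 j) (by rw [wt_e 0 j hj.symm]; exact even_two)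
      (Or.inl rfl)
    rw [wt_e 0 j hj.symm] at this
    omega
  have hd : ∀ j j' k k' : Fin 4, j ≠ 0 → j' ≠ 0 → j ≠ j' → R (φ (e 0 j)) (e 0 k) →
      R (φ (e 0 j')) (e 0 k') → k ≠ k' := by
    rintro j j' k k' h1 h2 h3 h4 h5 rfl
    have a := keyd 1 rfl φ hb hi (x := e 0 j) (y := e 0 j')
      (by rw [wt_e 0 j h1.symm]; exact even_two) (by rw [wt_e 0 j' h2.symm]; exact even_two) h4 h5
    have b : ∀ j j' : Fin 4, j ≠ 0 → j' ≠ 0 → j ≠ j' → hammingNorm (e 0 j + e 0 j') = 2 := by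
      unfold e; decide
    rw [b j j' h1 h2 h3, add_self] at a
    simp at a
  obtain ⟨a, a0, ha⟩ := hr 1 (by decide)
  obtain ⟨b, b0, hb'⟩ := hr 2 (by decide)
  obtain ⟨c, c0, hc⟩ := hr 3 (by decide)
  obtain ⟨σ, s0, s1, s2, s3⟩ := four_perm a b c a0 b0 c0
    (hd 1 2 a b (by decide) (by decide) (by decide) ha hb')
    (hd 1 3 a c (by decide) (by decide) (by decide) ha hc)
    (hd 2 3 b c (by decide) (by decide) (by decide) hb' hc)
  have base : ∀ j, j ≠ 0 → R (φ (e 0 j)) (e (σ 0) (σ j)) := by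
    intro j hj
    rw [s0]
    fin_cases j
    · exact absurd rfl hj
    · simpa [s1] using ha
    · simpa [s2] using hb'
    · simpa [s3] using hc
  refine ⟨σ, fun i j hij => ?_⟩
  by_cases hi0 : i = 0
  · subst hi0; exact base j hij.symm
  by_cases hj0 : j = 0
  · subst hj0; rw [e_comm, e_comm (σ i)]; exact base i hij
  obtain ⟨k, hk0, hki, hkj⟩ : ∃ k : Fin 4, k ≠ 0 ∧ k ≠ i ∧ k ≠ j := by
    clear * -
    revert i j; decide
  have e1 : e i j = e 0 k + 1 := four_e i j 0 k hij hk0.symm hi0 hki.symm hj0 hkj.symm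
  have ne : ∀ {p q : Fin 4}, p ≠ q → σ p ≠ σ q := fun h h' => h (σ.injective h')
  have e2 : e (σ i) (σ j) = e (σ 0) (σ k) + 1 := four_e _ _ _ _ (ne hij) (ne hk0.symm) (ne hi0)
    (ne hki.symm) (ne hj0) (ne hkj.symm)
  rw [e1, e2, R_image 1 rfl φ hi]
  exact (base k hk0).add (Or.inl rfl)

lemma sigma_all (m : ℕ) (hn : n = 4 * m) (hm : 0 < m) (φ : (Fin n → ZMod 2) → Fin n → ZMod 2)
    (hb : Function.Bijective φ) (hi : Iso φ) (h0 : R (φ 0) 0) :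
    ∃ σ : Equiv.Perm (Fin n), ∀ i j, i ≠ j → R (φ (e i j)) (e (σ i) (σ j)) := by
  by_cases h : 2 ≤ m
  · exact sigma_big m hn h φ hb hi h0
  · obtain rfl : m = 1 := by omega
    obtain rfl : n = 4 := by omega
    exact sigma_four φ hb hi h0

lemma struct (m : ℕ) (hn : n = 4 * m) (hm : 0 < m) (φ : (Fin n → ZMod 2) → Fin n → ZMod 2)
    (hb : Function.Bijective φ) (hi : Iso φ) (h0 : R (φ 0) 0) :
    ∃ π : Equiv.Perm (Fin n), ∀ c, Even (hammingNorm c) → R (φ c) (fun k => c (π k)) := by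
  obtain ⟨σ, hσ⟩ := sigma_all m hn hm φ hb hi h0
  refine ⟨σ.symm, fun c hc => ?_⟩
  refine (g_R φ c).trans ?_
  have hw := g_wt m hn φ hb hi h0 hc
  set c' := g φ c with hc'
  have hp : ∀ i j, i ≠ j → (c i = c j ↔ c' (σ i) = c' (σ j)) := by
    intro i j hij
    have a := keyd m hn φ hb hi hc (by rw [wt_e i j hij]; exact even_two) (g_R φ c) (hσ i j hij)
    have b1 := wt_add_e c i j hij
    have b2 := wt_add_e c' (σ i) (σ j) (fun h => hij (σ.injective h))
    rw [← hc'] at a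
    obtain ⟨t, ht⟩ := hc
    rcases z2 (c i) with h1 | h1 <;> rcases z2 (c j) with h2 | h2 <;>
    rcases z2 (c' (σ i)) with h3 | h3 <;> rcases z2 (c' (σ j)) with h4 | h4 <;>
    simp [h1, h2, h3, h4] at b1 b2 ⊢ <;> omega
  have z : Fin n := ⟨0, by omega⟩
  have hp' : ∀ i, (c z = c i ↔ c' (σ z) = c' (σ i)) := by
    intro i
    by_cases h : z = i
    · subst h; simp
    · exact hp z i h
  by_cases hz : c' (σ z) = c z
  · left
    funext k
    have := hp' (σ.symm k)
    rw [σ.apply_symm_apply] at this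
    revert this hz
    generalize c' (σ z) = p
    generalize c z = q
    generalize c' k = r
    generalize c (σ.symm k) = s
    revert p q r s
    decide
  · right
    funext k
    have := hp' (σ.symm k)
    rw [σ.apply_symm_apply] at this
    simp only [Pi.add_apply, Pi.one_apply]
    revert this hz
    generalize c' (σ z) = p
    generalize c z = q
    generalize c' k = r
    generalize c (σ.symm k) = s
    revert p q r s
    decide

lemma structS (m : ℕ) (hn : n = 4 * m) (hm : 0 < m) (hn0 : 0 < n)
    (φ : (Fin n → ZMod 2) → Fin n → ZMod 2)
    (hb : Function.Bijective φ) (hi : Iso φ) (h0 : R (φ 0) 0) :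
    ∃ (π : Equiv.Perm (Fin n)) (S : Set (Fin n → ZMod 2)),
      S ⊆ {c | (hammingNorm c < n / 2 ∨
        (hammingNorm c = n / 2 ∧ c ⟨0, hn0⟩ = 0)) ∧ Even (hammingNorm c)} ∧
      ∀ c, Even (hammingNorm c) →
        (({c, c + 1} : Set (Fin n → ZMod 2)) ∩ S = ∅ →
          φ c = fun k => c (π k)) ∧
        (({c, c + 1} : Set (Fin n → ZMod 2)) ∩ S ≠ ∅ →
          φ c = (fun k => c (π k)) + 1) := by
  obtain ⟨π, hπ⟩ := struct m hn hm φ hb hi h0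
  refine ⟨π, {c | ((hammingNorm c < n / 2 ∨
        (hammingNorm c = n / 2 ∧ c ⟨0, hn0⟩ = 0)) ∧ Even (hammingNorm c)) ∧
        φ c = (fun k => c (π k)) + 1}, fun c hc => hc.1, ?_⟩
  intro c hc
  have hone : ((fun k => (c + 1) (π k)) : Fin n → ZMod 2) = (fun k => c (π k)) + 1 := rfl
  have hw := wt_one c
  have him := R_image m hn φ hi c
  constructor
  · intro hS
    rw [Set.eq_empty_iff_forall_notMem] at hS
    have s1 := hS c
    have s2 := hS (c + 1)
    simp only [Set.mem_inter_iff, Set.mem_insert_iff, Set.mem_singleton_iff, true_or, or_true,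
      true_and, Set.mem_ofPred_eq, not_and] at s1 s2
    rcases hπ c hc with h | h
    · exact h
    exfalso
    by_cases hX : hammingNorm c < n / 2 ∨ (hammingNorm c = n / 2 ∧ c ⟨0, hn0⟩ = 0)
    · exact s1 ⟨hX, hc⟩ h
    · refine s2 ⟨?_, ?_⟩ ?_
      · by_cases hl : hammingNorm c = n / 2
        · right
          refine ⟨by omega, ?_⟩
          rcases z2 (c ⟨0, hn0⟩) with h | h
          · exact absurd (Or.inr ⟨hl, h⟩) hX
          · simp only [Pi.add_apply, Pi.one_apply, h]; decide
        · left; omega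
      · rw [Nat.even_iff] at *; omega
      · rw [him, hone, h]
  · intro hS
    obtain ⟨d, hd, hdS⟩ := Set.nonempty_iff_ne_empty.mpr hS
    rcases hd with rfl | rfl
    · exact hdS.2
    · have := hdS.2
      rw [him, hone] at this
      exact add_right_cancel this

lemma wt_perm (c : Fin n → ZMod 2) (π : Equiv.Perm (Fin n)) :
    hammingNorm (fun k => c (π k)) = hammingNorm c := by
  unfold hammingNorm
  apply card_equiv π
  intro i; simp

/-- the reverse direction on one parity class -/
lemma back (φ : (Fin n → ZMod 2) → Fin n → ZMod 2) (π : Equiv.Perm (Fin n))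
    (S : Set (Fin n → ZMod 2)) (a b : Fin n → ZMod 2) (P : (Fin n → ZMod 2) → Prop)
    (H : ∀ c, P c →
        (({c + a, c + a + 1} : Set (Fin n → ZMod 2)) ∩ S = ∅ →
          φ c = b + (fun k => (c + a) (π k))) ∧
        (({c + a, c + a + 1} : Set (Fin n → ZMod 2)) ∩ S ≠ ∅ →
          φ c = b + (fun k => (c + a) (π k)) + 1)) (hn : 2 ∣ n) (x y) (hx : P x) (hy : P y)
    (h : hammingDist x y = n / 2 ∨ hammingDist x y = n) :
    hammingDist (φ x) (φ y) = hammingDist x y := by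
  have hr : ∀ c, P c → R (φ c) (b + (fun k => (c + a) (π k))) := by
    intro c hc
    by_cases hS : ({c + a, c + a + 1} : Set (Fin n → ZMod 2)) ∩ S = ∅
    · exact Or.inl ((H c hc).1 hS)
    · exact Or.inr ((H c hc).2 hS)
  have hsum : b + (fun k => (x + a) (π k)) + (b + (fun k => (y + a) (π k))) =
      fun k => (x + y) (π k) := by
    funext k
    simp only [Pi.add_apply]
    generalize x (π k) = p
    generalize y (π k) = q
    generalize a (π k) = r
    generalize b k = s
    revert p q r s; decide
  rcases h with h | h
  · have := ((hr x hx).add (hr y hy)).wt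
    rw [hsum, wt_perm] at this
    rw [dist_eq] at h ⊢
    rw [dist_eq]
    omega
  · have hxy : y = x + 1 := by
      rw [dist_eq] at h
      have h3 := wt_one (x + y)
      have h4 : hammingNorm (x + y + 1) = 0 := by omega
      rw [hammingNorm_eq_zero] at h4
      calc y = (x + y + 1) + 1 + x := by rw [add_add_self, add_comm x y, add_add_self]
        _ = _ := by rw [h4]; ring
    have hset : ({x + a, x + a + 1} : Set (Fin n → ZMod 2)) = {y + a, y + a + 1} := by
      rw [hxy, Set.pair_comm]
      congr 1
      · ring
      · congr 1
        rw [show x + 1 + a + 1 = x + a + 1 + 1 by ring, add_add_self]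
    have hfun : ((fun k => (y + a) (π k)) : Fin n → ZMod 2) = (fun k => (x + a) (π k)) + 1 := by
      funext k
      simp only [hxy, Pi.add_apply, Pi.one_apply]; ring
    have hφ : φ y = φ x + 1 := by
      by_cases hS : ({x + a, x + a + 1} : Set (Fin n → ZMod 2)) ∩ S = ∅
      · rw [(H x hx).1 hS, (H y hy).1 (hset ▸ hS), hfun]; ring
      · rw [(H x hx).2 hS, (H y hy).2 (hset ▸ hS), hfun]; ring
    rw [h, hφ, dist_eq, ← add_assoc, add_self]
    simpa using wt_one (0 : Fin n → ZMod 2)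

end HI
/-- For `4 ∣ n`, a bijection of the Boolean cube `C_n` stabilizing `{0̄, 1̄}` is an
`{n/2, n}`-isometry if and only if it is given, independently on even- and odd-weight
words, by the construction of Theorem `half2`: permutations `π₁, π₂`, subsets
`S₁, S₂ ⊆ E_X` and odd-weight words `a, b`. -/
theorem halfIsometry_classification_of_four_dvd (n : ℕ) (hn : 4 ∣ n) (hn0 : 0 < n)
    (φ : (Fin n → ZMod 2) → Fin n → ZMod 2) (hbij : Function.Bijective φ)
    (hstab : φ '' {0, 1} = {0, 1}) :
    (∀ x y, (hammingDist x y = n / 2 ∨ hammingDist x y = n) →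
      hammingDist (φ x) (φ y) = hammingDist x y) ↔
    (∃ (π₁ π₂ : Equiv.Perm (Fin n)) (S₁ S₂ : Set (Fin n → ZMod 2))
        (a b : Fin n → ZMod 2),
      S₁ ⊆ {c | (hammingNorm c < n / 2 ∨
        (hammingNorm c = n / 2 ∧ c ⟨0, hn0⟩ = 0)) ∧ Even (hammingNorm c)} ∧
      S₂ ⊆ {c | (hammingNorm c < n / 2 ∨
        (hammingNorm c = n / 2 ∧ c ⟨0, hn0⟩ = 0)) ∧ Even (hammingNorm c)} ∧
      Odd (hammingNorm a) ∧ Odd (hammingNorm b) ∧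
      (∀ c, Even (hammingNorm c) →
        (({c, c + 1} : Set (Fin n → ZMod 2)) ∩ S₁ = ∅ →
          φ c = fun k => c (π₁ k)) ∧
        (({c, c + 1} : Set (Fin n → ZMod 2)) ∩ S₁ ≠ ∅ →
          φ c = (fun k => c (π₁ k)) + 1)) ∧
      (∀ c, Odd (hammingNorm c) →
        (({c + a, c + a + 1} : Set (Fin n → ZMod 2)) ∩ S₂ = ∅ →
          φ c = b + (fun k => (c + a) (π₂ k))) ∧
        (({c + a, c + a + 1} : Set (Fin n → ZMod 2)) ∩ S₂ ≠ ∅ →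
          φ c = b + (fun k => (c + a) (π₂ k)) + 1))) := by
  obtain ⟨m, hm⟩ := hn
  have hm0 : 0 < m := by omega
  constructor
  · intro hi
    have h0 : HI.R (φ 0) 0 := by
      have : φ 0 ∈ ({0, 1} : Set (Fin n → ZMod 2)) := by
        rw [← hstab]; exact ⟨0, by simp, rfl⟩
      rcases this with h | h
      · exact Or.inl h
      · exact Or.inr (by rw [zero_add]; exact h)
    obtain ⟨π₁, S₁, hS₁, H₁⟩ := HI.structS m hm hm0 hn0 φ hbij hi h0
    let a : Fin n → ZMod 2 := Pi.single ⟨0, hn0⟩ 1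
    have ha : hammingNorm a = 1 := by
      rw [HI.wt_supp, Finset.card_eq_one]
      refine ⟨⟨0, hn0⟩, ?_⟩
      ext k
      by_cases h : k = ⟨0, hn0⟩ <;> simp [HI.supp, a, Pi.single_apply, h]
    have hbo : Odd (hammingNorm (φ a)) := by
      have h1 := HI.dist_iso_odd m hm φ hbij hi a 0 (by
        rw [HI.dist_eq, add_zero, ha]; decide)
      have h2 : HI.R (φ a + φ 0) (φ a + 0) := HI.R.add (Or.inl rfl) h0
      rw [add_zero] at h2
      have h3 := h2.wt
      rw [HI.dist_eq, Nat.even_iff] at h1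
      rw [Nat.odd_iff]
      omega
    let ψ : (Fin n → ZMod 2) → Fin n → ZMod 2 := fun c => φ (c + a) + φ a
    have hψb : Function.Bijective ψ :=
      ((Equiv.addRight (φ a)).bijective.comp hbij).comp (Equiv.addRight a).bijective
    have hψi : HI.Iso ψ := by
      intro x y h
      have e1 : hammingDist (x + a) (y + a) = hammingDist x y := by
        rw [HI.dist_eq, HI.dist_eq, show x + a + (y + a) = x + y + a + a by ring, HI.add_add_self]
      have e2 : hammingDist (ψ x) (ψ y) = hammingDist (φ (x + a)) (φ (y + a)) := by
        rw [HI.dist_eq, HI.dist_eq]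
        rw [show ψ x + ψ y = φ (x + a) + φ (y + a) + φ a + φ a by simp only [ψ]; ring,
          HI.add_add_self]
      rw [e2, ← e1]
      exact hi _ _ (by rw [e1]; exact h)
    have hψ0 : HI.R (ψ 0) 0 := Or.inl (by simp only [ψ, zero_add, HI.add_self])
    obtain ⟨π₂, S₂, hS₂, H₂⟩ := HI.structS m hm hm0 hn0 ψ hψb hψi hψ0
    refine ⟨π₁, π₂, S₁, S₂, a, φ a, hS₁, hS₂, by rw [ha]; decide, hbo, H₁, ?_⟩
    intro c hc
    have hce : Even (hammingNorm (c + a)) := by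
      have := HI.wt_add c a
      rw [Nat.odd_iff] at hc
      rw [Nat.even_iff]
      omega
    have hψc : φ c = φ a + ψ (c + a) := by
      simp only [ψ]
      rw [HI.add_add_self, add_comm, HI.add_add_self]
    obtain ⟨K1, K2⟩ := H₂ (c + a) hce
    refine ⟨fun h => ?_, fun h => ?_⟩
    · rw [hψc, K1 h]
    · rw [hψc, K2 h, add_assoc]
  · rintro ⟨π₁, π₂, S₁, S₂, a, b, -, -, -, -, H₁, H₂⟩ x y h
    have hpar : Even (hammingNorm x) ↔ Even (hammingNorm y) := by
      have := HI.wt_add x y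
      rw [HI.dist_eq] at h
      rw [Nat.even_iff, Nat.even_iff]
      omega
    by_cases hx : Even (hammingNorm x)
    · refine HI.back φ π₁ S₁ 0 0 (fun c => Even (hammingNorm c)) ?_ (by omega) x y hx
        (hpar.mp hx) h
      simpa only [add_zero, zero_add] using H₁
    · have hy := fun h => hx (hpar.mpr h)
      exact HI.back φ π₂ S₂ a b (fun c => Odd (hammingNorm c)) H₂ (by omega) x y
        (Nat.not_even_iff_odd.mp hx) (Nat.not_even_iff_odd.mp hy) h
end

section
/- Let n be odd and let φ be an (n+1)/2-isometry of C_n. Embed C_n into C_{n+1} via c ↦ (0,c), and define ψ : C_{n+1} → C_{n+1} by ψ((0,c)) = (0, φ(c)) and ψ(1̄ + (0,c)) = 1̄ + (0, φ(c)) for all c ∈ C_n, where 1̄ is the all-ones word of C_{n+1}. Then ψ is an {(n+1)/2, n+1}-isometry of C_{n+1}. -/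
theorem aux_hd_cons {n : ℕ} (a b : Fin n → ZMod 2) :
    hammingDist (Fin.cons 0 a : Fin (n + 1) → ZMod 2) (Fin.cons 0 b) = hammingDist a b := by
  simp only [hammingDist, Finset.card_filter]
  rw [Fin.sum_univ_succ]
  simp

theorem aux_hd_add {N : ℕ} (a b : Fin N → ZMod 2) :
    hammingDist (1 + a) (1 + b) = hammingDist a b := by
  simp [hammingDist]

theorem aux_hd_compl {N : ℕ} (a b : Fin N → ZMod 2) :
    hammingDist a (1 + b) + hammingDist a b = N := by
  simp only [hammingDist, Finset.card_filter]
  rw [← Finset.sum_add_distrib]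
  have h2 : ∀ u v : ZMod 2, ((if u ≠ 1 + v then 1 else 0) + (if u ≠ v then 1 else 0) : ℕ) = 1 := by
    decide
  have : ∀ i : Fin N, ((if a i ≠ (1 + b) i then 1 else 0) + (if a i ≠ b i then 1 else 0) : ℕ) = 1 :=
    fun i => h2 (a i) (b i)
  simp only [this]
  simp

theorem aux_decomp {n : ℕ} (x : Fin (n + 1) → ZMod 2) :
    ∃ c : Fin n → ZMod 2, x = Fin.cons 0 c ∨ x = 1 + Fin.cons 0 c := by
  have h2 : ∀ u : ZMod 2, u = 0 ∨ u = 1 := by decide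
  have h3 : ∀ u : ZMod 2, u = 1 + (1 + u) := by decide
  rcases h2 (x 0) with h | h
  · refine ⟨Fin.tail x, Or.inl ?_⟩
    rw [← h, Fin.cons_self_tail]
  · refine ⟨fun i => 1 + x i.succ, Or.inr ?_⟩
    funext i
    refine Fin.cases ?_ (fun j => ?_) i
    · simp [h]
    · simpa using h3 (x j.succ)

/-- For `n` odd, an `(n+1)/2`-isometry `φ` of `C_n` extends, via the embedding
`c ↦ (0, c)` of `C_n` into `C_{n+1}` and the rule `ψ(0,c) = (0, φ c)`,
`ψ(1̄ + (0,c)) = 1̄ + (0, φ c)`, to an `{(n+1)/2, n+1}`-isometry `ψ` of `C_{n+1}`. -/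
theorem extend_to_cube_succ (n : ℕ) (hodd : Odd n)
    (φ : (Fin n → ZMod 2) → Fin n → ZMod 2) (hbij : Function.Bijective φ)
    (hφ : ∀ x y, hammingDist x y = (n + 1) / 2 →
      hammingDist (φ x) (φ y) = (n + 1) / 2)
    (ψ : (Fin (n + 1) → ZMod 2) → Fin (n + 1) → ZMod 2)
    (hψ0 : ∀ c : Fin n → ZMod 2,
      ψ (Fin.cons 0 c) = Fin.cons 0 (φ c))
    (hψ1 : ∀ c : Fin n → ZMod 2,
      ψ (1 + Fin.cons 0 c) = 1 + Fin.cons 0 (φ c)) :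
    Function.Bijective ψ ∧
    ∀ x y : Fin (n + 1) → ZMod 2,
      (hammingDist x y = (n + 1) / 2 ∨ hammingDist x y = n + 1) →
      hammingDist (ψ x) (ψ y) = hammingDist x y := by
  have hk : (n + 1) / 2 + (n + 1) / 2 = n + 1 := by
    obtain ⟨k, rfl⟩ := hodd
    omega
  have hsurj : Function.Surjective ψ := by
    intro y
    obtain ⟨c, hc⟩ := aux_decomp y
    obtain ⟨d, rfl⟩ := hbij.2 c
    rcases hc with rfl | rfl
    · exact ⟨_, hψ0 d⟩
    · exact ⟨_, hψ1 d⟩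
  refine ⟨Finite.surjective_iff_bijective.mp hsurj, ?_⟩
  have hle : ∀ a b : Fin n → ZMod 2, hammingDist a b ≤ n := fun a b => by
    simpa using hammingDist_le_card_fintype (x := a) (y := b)
  have key0 : ∀ a b : Fin n → ZMod 2,
      (hammingDist a b = (n + 1) / 2 ∨ hammingDist a b = 0) →
      hammingDist (φ a) (φ b) = hammingDist a b := by
    rintro a b (h | h)
    · rw [h, hφ a b h]
    · rw [hammingDist_eq_zero] at h
      subst h
      simp
  have key1 : ∀ a b : Fin n → ZMod 2,
      hammingDist (Fin.cons 0 a : Fin (n + 1) → ZMod 2) (1 + Fin.cons 0 b)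
        + hammingDist a b = n + 1 := fun a b => by
    rw [← aux_hd_cons a b]
    exact aux_hd_compl _ _
  intro x y hxy
  obtain ⟨a, ha⟩ := aux_decomp x
  obtain ⟨b, hb⟩ := aux_decomp y
  have hab := hle a b
  have h1 := key1 a b
  have h2 := key1 (φ a) (φ b)
  have h3 := key1 b a
  have h4 := key1 (φ b) (φ a)
  rw [hammingDist_comm b a] at h3
  rw [hammingDist_comm (φ b) (φ a)] at h4
  have h0 := key0 a b
  rcases ha with rfl | rfl <;> rcases hb with rfl | rfl
  · rw [aux_hd_cons] at hxy
    rw [hψ0, hψ0, aux_hd_cons, aux_hd_cons]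
    exact h0 (by omega)
  · rw [hψ0, hψ1]
    have := h0 (by omega)
    omega
  · rw [hammingDist_comm] at hxy
    rw [hψ0, hψ1, hammingDist_comm, hammingDist_comm (1 + _)]
    have := h0 (by omega)
    omega
  · rw [aux_hd_add, aux_hd_cons] at hxy
    rw [hψ1, hψ1, aux_hd_add, aux_hd_add, aux_hd_cons, aux_hd_cons]
    exact h0 (by omega)
end

section
/- Let n be odd and let φ be a σ_{i,j}-mapping on C_n. Then φ maps the set E of even-weight words onto E and the set O of odd-weight words onto O, and for every word a one has φ ∘ T_a = T_{φ(a)} ∘ φ. -/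
/-- The `σ_{i,j}`-mapping of the Boolean cube `C_n` associated with coordinates `i, j` and
a bijection `σ : {1,…,n} \ {i} → {1,…,n} \ {j}`. -/
def sigmaMap (n : ℕ) (i j : Fin n)
    (σ : {k : Fin n // k ≠ i} ≃ {k : Fin n // k ≠ j}) :
    (Fin n → ZMod 2) → Fin n → ZMod 2 :=
  fun c k => if h : k = j then c i else c (σ.symm ⟨k, h⟩).1 + c i

theorem hamming_cast_aux (n : ℕ) (c : Fin n → ZMod 2) :
    ((hammingNorm c : ℕ) : ZMod 2) = ∑ k, c k := by
  unfold hammingNorm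
  rw [Finset.card_filter, Nat.cast_sum]
  refine Finset.sum_congr rfl fun k _ => ?_
  generalize c k = x
  have hx : x = 0 ∨ x = 1 := by
    revert x
    decide
  rcases hx with rfl | rfl <;> simp

theorem sum_split_aux (n : ℕ) (i : Fin n) (c : Fin n → ZMod 2) :
    ∑ k, c k = c i + ∑ k : {k : Fin n // k ≠ i}, c k.1 := by
  rw [← Finset.add_sum_erase _ _ (Finset.mem_univ i)]
  congr 1
  exact Finset.sum_subtype _ (by simp) _

theorem sigmaMap_sum_aux (n : ℕ) (hodd : Odd n) (i j : Fin n)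
    (σ : {k : Fin n // k ≠ i} ≃ {k : Fin n // k ≠ j}) (c : Fin n → ZMod 2) :
    ∑ k, sigmaMap n i j σ c k = ∑ k, c k := by
  rw [sum_split_aux n j, sum_split_aux n i c]
  have h1 : sigmaMap n i j σ c j = c i := by simp [sigmaMap]
  have h2 : ∀ k : {k : Fin n // k ≠ j},
      sigmaMap n i j σ c k.1 = c (σ.symm k).1 + c i := by
    rintro ⟨k, hk⟩
    simp [sigmaMap, hk]
  rw [h1, Finset.sum_congr rfl fun k _ => h2 k, Finset.sum_add_distrib,
    Equiv.sum_comp σ.symm (fun k => c k.1)]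
  have h3 : ((n - 1 : ℕ) : ZMod 2) = 0 := by
    rw [ZMod.natCast_eq_zero_iff_even]
    obtain ⟨m, rfl⟩ := hodd
    simp
  have h4 : Fintype.card {k : Fin n // k ≠ j} = n - 1 := by
    simp [Fintype.card_subtype_compl]
  rw [Finset.sum_const, Finset.card_univ, h4, nsmul_eq_mul, h3]
  simp

theorem sigmaMap_surjective_aux (n : ℕ) (i j : Fin n)
    (σ : {k : Fin n // k ≠ i} ≃ {k : Fin n // k ≠ j}) :
    Function.Surjective (sigmaMap n i j σ) := by
  apply Finite.surjective_of_injective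
  intro c d h
  have hi : c i = d i := by simpa [sigmaMap] using congrFun h j
  funext k
  by_cases hk : k = i
  · rw [hk, hi]
  · have := congrFun h (σ ⟨k, hk⟩).1
    simpa [sigmaMap, (σ ⟨k, hk⟩).2, hi] using this

theorem sigmaMap_even_aux (n : ℕ) (hodd : Odd n) (i j : Fin n)
    (σ : {k : Fin n // k ≠ i} ≃ {k : Fin n // k ≠ j}) (c : Fin n → ZMod 2) :
    Even (hammingNorm (sigmaMap n i j σ c)) ↔ Even (hammingNorm c) := by
  rw [← ZMod.natCast_eq_zero_iff_even, ← ZMod.natCast_eq_zero_iff_even,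
    hamming_cast_aux, hamming_cast_aux, sigmaMap_sum_aux n hodd]

/-- For `n` odd, every `σ_{i,j}`-mapping `φ` maps the even-weight words onto the
even-weight words and the odd-weight words onto the odd-weight words, and satisfies
`φ ∘ T_a = T_{φ a} ∘ φ` for every word `a`. -/
theorem sigmaMap_properties (n : ℕ) (hodd : Odd n) (i j : Fin n)
    (σ : {k : Fin n // k ≠ i} ≃ {k : Fin n // k ≠ j}) :
    sigmaMap n i j σ '' {c | Even (hammingNorm c)} = {c | Even (hammingNorm c)} ∧
    sigmaMap n i j σ '' {c | Odd (hammingNorm c)} = {c | Odd (hammingNorm c)} ∧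
    ∀ (a c : Fin n → ZMod 2),
      sigmaMap n i j σ (c + a) = sigmaMap n i j σ c + sigmaMap n i j σ a := by
  have he := sigmaMap_even_aux n hodd i j σ
  have hs := sigmaMap_surjective_aux n i j σ
  refine ⟨?_, ?_, ?_⟩
  · ext d
    constructor
    · rintro ⟨c, hc, rfl⟩
      exact (he c).2 hc
    · intro hd
      obtain ⟨c, rfl⟩ := hs d
      exact ⟨c, (he c).1 hd, rfl⟩
  · ext d
    simp only [← Nat.not_even_iff_odd]
    constructor
    · rintro ⟨c, hc, rfl⟩
      exact fun h => hc ((he c).1 h)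
    · intro hd
      obtain ⟨c, rfl⟩ := hs d
      exact ⟨c, fun h => hd ((he c).2 h), rfl⟩
  · intro a c
    funext k
    by_cases hk : k = j
    · simp [sigmaMap, hk]
    · simp only [sigmaMap, hk, Pi.add_apply, dite_false]
      ring
end
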